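/- arXiv:2412.02523 — 9 statements merged into one kernel-verified Lean document; each statement's English description precedes it below -/
import Mathlib

section
/- Let p be a prime and let α₁,…,α_m and β₁,…,β_n be rational numbers that all lie in ℤ_p, none of which is a nonpositive integer. Write ₘF_n(α;β;z) = Σ_{k≥0} A_k z^k. Then for every k ≥ 0, ν_p(A_k) = Σ_{i=1}^m c_p(α_i − 1, k) − Σ_{j=1}^n c_p(β_j − 1, k) + (m − n − 1)·ν_p(k!), where ν_p denotes the p-adic valuation. -/
/-!
The formula reduces to one parameter at a time: if `q ∈ ℤ_p` is not a nonpositive integer and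
`x = q - 1`, then `ν_p((q)_k) = c_p(x, k) + ν_p(k!)`.

For this, truncate `x` to the natural number `a = x mod p^N`, with `N` so large that `p^N` divides
none of the finitely many nonzero factors `x + 1 + i = q + i`, `i < k`. Then `a + 1 + i` has the
same valuation as `q + i`, so `(q)_k` has the same valuation as
`(a + 1)(a + 2)⋯(a + k) = k! * (a + k).choose k`, and the valuation of the binomial coefficient is
the number of carries in `a + k` by Kummer's theorem. Finally, `x + k` and `a + k` have the same
carries: below place `N` the digits agree, and a carry at a place `j` with `j + 1 ≥ N` would force some
`x_{(j+1)} + 1 + i` to equal `p^(j+1)`, making `p^N` divide `x + 1 + i`.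
-/

open scoped BigOperators

/-- The coefficient `A_k` of the generalized hypergeometric series
`ₘFₙ(α;β;z) = Σ A_k z^k`. -/
noncomputable def hgCoeff (m n : ℕ) (α : Fin m → ℚ) (β : Fin n → ℚ) (k : ℕ) : ℚ :=
  (∏ i, (ascPochhammer ℚ k).eval (α i)) /
    ((∏ j, (ascPochhammer ℚ k).eval (β j)) * (k.factorial : ℚ))

/-- The number of carries `c_p(x,k)` needed to compute the `p`-adic sum `x + k`:
a carry occurs at place `j` iff the representatives mod `p^(j+1)` sum to at least `p^(j+1)`. -/
noncomputable def carries {p : ℕ} [Fact p.Prime] (x : ℤ_[p]) (k : ℕ) : ℕ :=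
  {j : ℕ | p ^ (j + 1) ≤ x.appr (j + 1) + k % p ^ (j + 1)}.ncard

/-- The truncations `x.appr` are compatible: reducing a finer one gives the coarser one. -/
lemma appr_mod_pow {p : ℕ} [Fact p.Prime] (x : ℤ_[p]) {l N : ℕ} (h : l ≤ N) :
    x.appr N % p ^ l = x.appr l := by
  have h1 := x.dvd_appr_sub_appr l N h
  have h2 := x.appr_mono h
  have h3 := (Nat.modEq_iff_dvd' h2).2 h1
  rw [← h3, Nat.mod_eq_of_lt (x.appr_lt l)]

/-- If the truncation of `x` mod `p^l` overflows on adding `k`, then one of `x + 1, …, x + k` is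
divisible by `p^l`. -/
lemma exists_dvd_of_le_appr_add {p : ℕ} [Fact p.Prime] (x : ℤ_[p]) (k l : ℕ)
    (h : p ^ l ≤ x.appr l + k) : ∃ i < k, (p : ℤ_[p]) ^ l ∣ x + 1 + i := by
  have h1 := x.appr_lt l
  refine ⟨p ^ l - x.appr l - 1, by omega, ?_⟩
  have h2 := Ideal.mem_span_singleton.1 (PadicInt.appr_spec l x)
  have h3 : ((x.appr l + 1 + (p ^ l - x.appr l - 1) : ℕ) : ℤ_[p]) = (p : ℤ_[p]) ^ l := by
    rw [show x.appr l + 1 + (p ^ l - x.appr l - 1) = p ^ l by omega]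
    push_cast
    rfl
  have h4 := dvd_add h2 h3.symm.dvd
  convert! h4 using 1
  push_cast
  ring

/-- Kummer's theorem for a `p`-adic summand, in terms of its truncation mod `p^N`. -/
lemma carries_eq_padicValNat_choose {p : ℕ} [Fact p.Prime] (x : ℤ_[p]) (k N : ℕ)
    (hN : ∀ i < k, ¬ (p : ℤ_[p]) ^ N ∣ x + 1 + i) :
    carries x k = padicValNat p ((x.appr N + k).choose k) := by
  have hlt : ∀ l, N ≤ l → x.appr l + k < p ^ l := by
    intro l hl
    by_contra! hc
    obtain ⟨i, hi, hd⟩ := exists_dvd_of_le_appr_add x k l hc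
    exact hN i hi ((pow_dvd_pow _ hl).trans hd)
  have hlog : Nat.log p (x.appr N + k) < N + 1 :=
    (Nat.log_lt_of_lt_pow' (by omega) ((hlt N le_rfl).trans
      (Nat.pow_lt_pow_right (Fact.out : p.Prime).one_lt (Nat.lt_succ_self N))))
  rw [padicValNat_choose' hlog, ← Set.ncard_coe_finset, carries,
    ← Set.ncard_image_of_injective _ Nat.succ_injective]
  congr 1
  ext l
  simp only [Set.mem_image, Set.mem_ofPred_eq, Finset.coe_filter, Finset.mem_Ico]
  constructor
  · rintro ⟨j, hj, rfl⟩
    have hjN : j + 1 ≤ N := by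
      by_contra! hc
      have := hlt (j + 1) hc.le
      have := Nat.mod_le k (p ^ (j + 1))
      omega
    refine ⟨by omega, ?_⟩
    rw [Nat.succ_eq_add_one, appr_mod_pow x hjN]
    omega
  · rintro ⟨⟨h1, h2⟩, h3⟩
    obtain ⟨j, rfl⟩ : ∃ j, l = j + 1 := ⟨l - 1, by omega⟩
    refine ⟨j, ?_, rfl⟩
    rw [appr_mod_pow x (by omega)] at h3
    omega

lemma exists_pow_not_dvd {p : ℕ} [Fact p.Prime] (x : ℤ_[p]) (k : ℕ)
    (hx : ∀ i < k, x + 1 + i ≠ 0) : ∃ N, ∀ i < k, ¬ (p : ℤ_[p]) ^ N ∣ x + 1 + i := by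
  refine ⟨1 + ∑ i ∈ Finset.range k, (x + 1 + i : ℤ_[p]).valuation, fun i hi hd => ?_⟩
  have h1 := (PadicInt.mem_span_pow_iff_le_valuation _ (hx i hi) _).1
    (Ideal.mem_span_singleton.2 hd)
  have h2 := Finset.single_le_sum (f := fun i : ℕ => (x + 1 + i : ℤ_[p]).valuation)
    (fun _ _ => Nat.zero_le _) (Finset.mem_range.2 hi)
  omega

/-- An element that `p^N` does not divide keeps its norm under a change modulo `p^N`. -/
lemma norm_eq_of_pow_dvd_sub {p : ℕ} [Fact p.Prime] {y z : ℤ_[p]} {N : ℕ}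
    (h : (p : ℤ_[p]) ^ N ∣ y - z) (hy : ¬ (p : ℤ_[p]) ^ N ∣ y) : ‖y‖ = ‖z‖ := by
  rw [← Ideal.mem_span_singleton, ← PadicInt.norm_le_pow_iff_mem_span_pow] at h hy
  exact Padic.norm_eq_of_norm_sub_lt_left (z1 := (y : ℚ_[p])) (z2 := z)
    (h.trans_lt (not_le.1 hy))

lemma padicValRat_eq_of_norm_eq {p : ℕ} [Fact p.Prime] {q r : ℚ} (hq : q ≠ 0) (hr : r ≠ 0)
    (h : ‖(q : ℚ_[p])‖ = ‖(r : ℚ_[p])‖) : padicValRat p q = padicValRat p r := by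
  rw [Padic.eq_padicNorm, Padic.eq_padicNorm, Rat.cast_inj, padicNorm.eq_zpow_of_nonzero hq,
    padicNorm.eq_zpow_of_nonzero hr] at h
  have hp : 1 < (p : ℚ) := mod_cast (Fact.out : p.Prime).one_lt
  exact neg_injective ((zpow_right_strictMono₀ hp).injective h)

lemma eval_ascPochhammer_ne_zero (k : ℕ) (q : ℚ) (hq : ∀ i < k, q + i ≠ 0) :
    (ascPochhammer ℚ k).eval q ≠ 0 := by
  induction k with
  | zero => simp
  | succ k ih =>
    rw [ascPochhammer_succ_eval]
    exact mul_ne_zero (ih fun i hi => hq i (by omega)) (hq k (by omega))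

lemma padicValRat_eval_ascPochhammer_congr {p : ℕ} [Fact p.Prime] (k : ℕ) (q r : ℚ)
    (hq : ∀ i < k, q + i ≠ 0) (hr : ∀ i < k, r + i ≠ 0)
    (h : ∀ i < k, padicValRat p (q + i) = padicValRat p (r + i)) :
    padicValRat p ((ascPochhammer ℚ k).eval q) = padicValRat p ((ascPochhammer ℚ k).eval r) := by
  induction k with
  | zero => simp
  | succ k ih =>
    rw [ascPochhammer_succ_eval, ascPochhammer_succ_eval,
      padicValRat.mul (eval_ascPochhammer_ne_zero k q fun i hi => hq i (by omega))
        (hq k (by omega)),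
      padicValRat.mul (eval_ascPochhammer_ne_zero k r fun i hi => hr i (by omega))
        (hr k (by omega)),
      ih (fun i hi => hq i (by omega)) (fun i hi => hr i (by omega)) (fun i hi => h i (by omega)),
      h k (by omega)]

/-- The one-parameter case: `ν_p((q)_k) = c_p(q - 1, k) + ν_p(k!)`. -/
lemma padicValRat_eval_ascPochhammer {p : ℕ} [Fact p.Prime] (k : ℕ) (q : ℚ) (x : ℤ_[p])
    (hx : (x : ℚ_[p]) = (q : ℚ_[p]) - 1) (hq : ∀ i < k, q + i ≠ 0) :
    padicValRat p ((ascPochhammer ℚ k).eval q) =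
      (carries x k : ℤ) + (padicValNat p k.factorial : ℤ) := by
  have hcast : ∀ i : ℕ, ((x + 1 + i : ℤ_[p]) : ℚ_[p]) = ((q + i : ℚ) : ℚ_[p]) := by
    intro i
    push_cast
    rw [hx]
    ring
  have hne : ∀ i < k, x + 1 + i ≠ 0 := by
    intro i hi h0
    have h1 := hcast i
    rw [h0, PadicInt.coe_zero] at h1
    exact hq i hi (by exact_mod_cast h1.symm)
  obtain ⟨N, hN⟩ := exists_pow_not_dvd x k hne
  have hr : ∀ i : ℕ, ((x.appr N + 1 : ℕ) : ℚ) + i ≠ 0 := fun i => by positivity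
  rw [carries_eq_padicValNat_choose x k N hN,
    padicValRat_eval_ascPochhammer_congr k q ((x.appr N + 1 : ℕ) : ℚ) hq (fun i _ => hr i)]
  · rw [← ascPochhammer_eval_cast, ascPochhammer_nat_eq_ascFactorial, padicValRat.of_nat,
      Nat.ascFactorial_eq_factorial_mul_choose,
      padicValNat.mul (Nat.factorial_ne_zero k) (Nat.choose_pos (Nat.le_add_left _ _)).ne']
    push_cast
    ring
  · intro i hi
    refine padicValRat_eq_of_norm_eq (hq i hi) (hr i) ?_
    have h1 : (p : ℤ_[p]) ^ N ∣ (x + 1 + i) - ((x.appr N + 1 + i : ℕ) : ℤ_[p]) := by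
      convert! Ideal.mem_span_singleton.1 (PadicInt.appr_spec N x) using 1
      push_cast
      ring
    have h2 := norm_eq_of_pow_dvd_sub h1 (hN i hi)
    rw [PadicInt.norm_def, PadicInt.norm_def, hcast] at h2
    rw [h2]
    push_cast
    rfl

lemma padicValRat_prod {p : ℕ} [Fact p.Prime] {ι : Type*} (s : Finset ι) (f : ι → ℚ)
    (hf : ∀ i ∈ s, f i ≠ 0) : padicValRat p (∏ i ∈ s, f i) = ∑ i ∈ s, padicValRat p (f i) := by
  classical
  induction s using Finset.induction_on with
  | empty => simp
  | insert a s ha ih =>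
    have hs : ∀ i ∈ s, f i ≠ 0 := fun i hi => hf i (Finset.mem_insert_of_mem hi)
    rw [Finset.prod_insert ha, Finset.sum_insert ha,
      padicValRat.mul (hf a (Finset.mem_insert_self a s)) (Finset.prod_ne_zero_iff.2 hs), ih hs]

theorem stmt0 (p : ℕ) [Fact p.Prime] (m n : ℕ) (α : Fin m → ℚ) (β : Fin n → ℚ)
    (hα : ∀ i, ¬ ∃ z : ℤ, z ≤ 0 ∧ α i = (z : ℚ))
    (hβ : ∀ j, ¬ ∃ z : ℤ, z ≤ 0 ∧ β j = (z : ℚ))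
    (A : Fin m → ℤ_[p]) (hA : ∀ i, (A i : ℚ_[p]) = (α i : ℚ_[p]) - 1)
    (B : Fin n → ℤ_[p]) (hB : ∀ j, (B j : ℚ_[p]) = (β j : ℚ_[p]) - 1)
    (k : ℕ) :
    padicValRat p (hgCoeff m n α β k) =
      (∑ i, (carries (A i) k : ℤ)) - (∑ j, (carries (B j) k : ℤ))
        + ((m : ℤ) - (n : ℤ) - 1) * (padicValNat p k.factorial : ℤ) := by
  have key : ∀ q : ℚ, (¬ ∃ z : ℤ, z ≤ 0 ∧ q = (z : ℚ)) → ∀ i < k, q + (i : ℚ) ≠ 0 := by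
    intro q hq i _ h
    exact hq ⟨-(i : ℤ), by omega, by push_cast; linarith⟩
  have hα' := fun i => eval_ascPochhammer_ne_zero k (α i) (key _ (hα i))
  have hβ' := fun j => eval_ascPochhammer_ne_zero k (β j) (key _ (hβ j))
  have hk : (k.factorial : ℚ) ≠ 0 := mod_cast k.factorial_ne_zero
  have hβp := Finset.prod_ne_zero_iff.2 fun j (_ : j ∈ Finset.univ) => hβ' j
  rw [hgCoeff, padicValRat.div (Finset.prod_ne_zero_iff.2 fun i _ => hα' i) (mul_ne_zero hβp hk),
    padicValRat.mul hβp hk, padicValRat_prod _ _ fun i _ => hα' i,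
    padicValRat_prod _ _ fun j _ => hβ' j, padicValRat.of_nat,
    Finset.sum_congr rfl fun i _ => padicValRat_eval_ascPochhammer k (α i) (A i) (hA i)
      (key _ (hα i)),
    Finset.sum_congr rfl fun j _ => padicValRat_eval_ascPochhammer k (β j) (B j) (hB j)
      (key _ (hβ j)),
    Finset.sum_add_distrib, Finset.sum_add_distrib]
  simp only [Finset.sum_const, Finset.card_univ, Fintype.card_fin, nsmul_eq_mul]
  ring
end

section
/- Let a = u/v be a rational number with gcd(u,v) = 1 and 0 < a < 1, and let p be a prime such that a − 1 is a p-adic unit. Let M be the multiplicative order of p modulo v. Then the p-adic expansion of a − 1 is purely periodic of period dividing M, i.e. (a−1)[j+M] = (a−1)[j] for all j ≥ 0, and for each 0 ≤ j ≤ M−1 the digit is given by (a−1)[j] = ⌊{−p^{M−1−j}·a}·p⌋. Moreover, if p > v then every digit (a−1)[j] is nonzero. -/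
/-!
Write `a = u / v` in lowest terms and let `mₙ ∈ [0, pⁿ)` be the residue of `x = a - 1` modulo `pⁿ`.
Then `pⁿ` divides `v mₙ + (v - u)`, and the quotient `tₙ` satisfies `0 < tₙ < v` because
`0 < v - u < v`. Modulo `v` one gets `pⁿ tₙ ≡ -u`, so `tₙ` is determined by `n` modulo the order `M`
of `p`; concretely `tₙ / v = {-p ^ (M - n) a}` for `n ≤ M`. Comparing consecutive values gives
`v · digit j = p · tⱼ₊₁ - tⱼ`, and all three claims follow from `0 < tⱼ < v`:
periodicity of `t` gives periodicity of the digits, `digit j = ⌊p tⱼ₊₁ / v⌋`, and the right-hand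
side is positive when `p > v`. The sequence `t` is constructed in `exists_remainders`.
-/

/-- The `j`-th digit of the `p`-adic expansion of `x ∈ ℤ_p`. -/
noncomputable def digit {p : ℕ} [Fact p.Prime] (x : ℤ_[p]) (j : ℕ) : ℕ :=
  x.appr (j + 1) / p ^ j

theorem appr_succ_eq {p : ℕ} [Fact p.Prime] (x : ℤ_[p]) (j : ℕ) :
    x.appr (j + 1) = x.appr j + p ^ j * digit x j := by
  have hle : x.appr j ≤ x.appr (j + 1) := x.appr_mono (Nat.le_succ j)
  obtain ⟨d, hd⟩ := x.dvd_appr_sub_appr j (j + 1) (Nat.le_succ j)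
  have hp : 0 < p ^ j := pow_pos (Fact.out (p := p.Prime)).pos j
  have h : x.appr (j + 1) = x.appr j + p ^ j * d := by omega
  have h2 : digit x j = d := by
    rw [digit, h, Nat.add_mul_div_left _ _ hp, Nat.div_eq_of_lt (x.appr_lt j), zero_add]
  rw [h2, h]

/-- The successive remainders `t` of the `p`-adic division of `u - v` by `v`. -/
theorem exists_remainders {p : ℕ} [Fact p.Prime] (x : ℤ_[p]) (u v : ℤ) (hu : 0 < u) (huv : u < v)
    (hx : (v : ℤ_[p]) * x = u - v) :
    ∃ t : ℕ → ℤ, (∀ n, 0 < t n ∧ t n < v) ∧ (∀ n, v ∣ (p : ℤ) ^ n * t n + u) ∧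
      ∀ j, v * (digit x j : ℤ) = p * t (j + 1) - t j := by
  have hp0 : (0 : ℤ) < p := by exact_mod_cast (Fact.out (p := p.Prime)).pos
  have hdvd : ∀ n, ∃ t : ℤ, v * (x.appr n : ℤ) + (v - u) = (p : ℤ) ^ n * t := by
    intro n
    have h1 := x.appr_spec n
    rw [Ideal.mem_span_singleton] at h1
    obtain ⟨c, hc⟩ := h1
    have h2 : ((p : ℤ_[p]) ^ n) ∣ ((v * (x.appr n : ℤ) + (v - u) : ℤ) : ℤ_[p]) := by
      refine ⟨-(v * c), ?_⟩
      push_cast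
      linear_combination (-(v : ℤ_[p])) * hc + hx
    rwa [PadicInt.pow_p_dvd_int_iff] at h2
  choose t ht using hdvd
  refine ⟨t, fun n => ?_, fun n => ?_, fun j => ?_⟩
  · have hpn : (0 : ℤ) < (p : ℤ) ^ n := pow_pos hp0 n
    have hlt : (x.appr n : ℤ) + 1 ≤ (p : ℤ) ^ n := by exact_mod_cast x.appr_lt n
    have hnn : (0 : ℤ) ≤ x.appr n := by positivity
    have := ht n
    constructor
    · refine pos_of_mul_pos_right (a := (p : ℤ) ^ n) ?_ hpn.le
      rw [← this]
      nlinarith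
    · refine lt_of_mul_lt_mul_left (a := (p : ℤ) ^ n) ?_ hpn.le
      rw [← this]
      nlinarith
  · exact ⟨x.appr n + 1, by linear_combination -ht n⟩
  · have h1 : (x.appr (j + 1) : ℤ) = x.appr j + (p : ℤ) ^ j * digit x j := by
      exact_mod_cast appr_succ_eq x j
    have hpn : (p : ℤ) ^ j ≠ 0 := (pow_pos hp0 j).ne'
    apply mul_left_cancel₀ hpn
    linear_combination ht (j + 1) - ht j - v * h1

theorem stmt1 (p : ℕ) [Fact p.Prime] (a : ℚ) (ha0 : 0 < a) (ha1 : a < 1)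
    (x : ℤ_[p]) (hx : (x : ℚ_[p]) = (a : ℚ_[p]) - 1) (hunit : IsUnit x)
    (M : ℕ) (hM : M = orderOf (p : ZMod a.den)) :
    (∀ j : ℕ, digit x (j + M) = digit x j) ∧
    (∀ j : ℕ, j ≤ M - 1 →
      (digit x j : ℤ) = ⌊Int.fract (-(p : ℚ) ^ (M - 1 - j) * a) * p⌋) ∧
    (a.den < p → ∀ j : ℕ, digit x j ≠ 0) := by
  have hp : p.Prime := Fact.out
  have hv0 : (0 : ℤ) < a.den := by exact_mod_cast a.den_pos
  have hvq : (0 : ℚ) < a.den := by exact_mod_cast a.den_pos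
  have hu : 0 < a.num := Rat.num_pos.mpr ha0
  have ha : a * a.den = a.num := Rat.mul_den_eq_num a
  have huv : a.num < (a.den : ℤ) := by
    have : (a.num : ℚ) < a.den := by rw [← ha]; nlinarith
    exact_mod_cast this
  have hvx : ((a.den : ℤ) : ℤ_[p]) * x = a.num - (a.den : ℤ) := by
    apply Subtype.coe_injective
    have h2 : (a : ℚ_[p]) * (a.den : ℚ_[p]) = (a.num : ℚ_[p]) := by
      exact_mod_cast congrArg (fun q : ℚ => (q : ℚ_[p])) ha
    push_cast
    rw [hx]
    linear_combination h2
  have hcop : Nat.Coprime p a.den := by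
    rw [hp.coprime_iff_not_dvd]
    rintro ⟨c, hc⟩
    -- Here `p ∣ v` would force `p ∣ u`, because `v x = u - v` with `x` integral.
    have h1 : ((p : ℤ_[p]) ^ 1) ∣ ((a.num : ℤ) : ℤ_[p]) := by
      refine ⟨c * (x + 1), ?_⟩
      have hc' : (((a.den : ℕ) : ℤ) : ℤ_[p]) = p * c := by rw [hc]; push_cast; ring
      rw [hc'] at hvx
      linear_combination -hvx
    rw [PadicInt.pow_p_dvd_int_iff, pow_one] at h1
    have h2 : p ∣ a.num.natAbs := Int.natCast_dvd.mp h1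
    exact hp.one_lt.ne' (Nat.dvd_one.mp (a.reduced ▸ Nat.dvd_gcd h2 ⟨c, hc⟩))
  have hMpos : 0 < M := by
    rw [hM, orderOf_pos_iff, isOfFinOrder_iff_pow_eq_one]
    refine ⟨a.den.totient, Nat.totient_pos.mpr a.den_pos, ?_⟩
    have := congrArg Units.val (ZMod.pow_totient (ZMod.unitOfCoprime p hcop))
    rwa [Units.val_pow_eq_pow_val, ZMod.coe_unitOfCoprime, Units.val_one] at this
  have hpM : (a.den : ℤ) ∣ (p : ℤ) ^ M - 1 := by
    rw [← ZMod.intCast_zmod_eq_zero_iff_dvd _ a.den]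
    push_cast
    rw [hM, pow_orderOf_eq_one, sub_self]
  have hcopn : ∀ n, IsCoprime (a.den : ℤ) ((p : ℤ) ^ n) := fun n =>
    (Nat.isCoprime_iff_coprime.mpr hcop.symm).pow_right
  obtain ⟨t, ht, htu, htd⟩ := exists_remainders x a.num a.den hu huv hvx
  have hper : ∀ j, t (j + M) = t j := by
    intro j
    have h1 : (a.den : ℤ) ∣ (p : ℤ) ^ j * (t (j + M) - t j) := by
      have h2 := dvd_sub (dvd_sub (htu (j + M)) (htu j))
        (hpM.mul_right ((p : ℤ) ^ j * t (j + M)))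
      have h3 : (p : ℤ) ^ (j + M) * t (j + M) + a.num - ((p : ℤ) ^ j * t j + a.num)
          - ((p : ℤ) ^ M - 1) * ((p : ℤ) ^ j * t (j + M)) = (p : ℤ) ^ j * (t (j + M) - t j) := by
        ring
      rwa [h3] at h2
    have h3 := (hcopn j).dvd_of_dvd_mul_left h1
    have := ht j
    have := ht (j + M)
    have h4 := Int.eq_zero_of_abs_lt_dvd h3 (by rw [abs_lt]; constructor <;> linarith)
    linarith
  refine ⟨fun j => ?_, fun j hj => ?_, fun hlt j h0 => ?_⟩
  · have h1 := htd (j + M)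
    rw [show j + M + 1 = j + 1 + M by ring, hper, hper, ← htd j] at h1
    exact_mod_cast mul_left_cancel₀ hv0.ne' h1
  · obtain ⟨k, hk⟩ : ∃ k, M = k + (j + 1) := ⟨M - 1 - j, by omega⟩
    have hkM : M - 1 - j = k := by omega
    have h1 : (a.den : ℤ) ∣ t (j + 1) + (p : ℤ) ^ k * a.num := by
      have h2 := dvd_sub ((htu (j + 1)).mul_left ((p : ℤ) ^ k)) (hpM.mul_right (t (j + 1)))
      have h3 : (p : ℤ) ^ k * ((p : ℤ) ^ (j + 1) * t (j + 1) + a.num)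
          - ((p : ℤ) ^ M - 1) * t (j + 1) = t (j + 1) + (p : ℤ) ^ k * a.num := by
        rw [hk]
        ring
      rwa [h3] at h2
    obtain ⟨z, hz⟩ := h1
    obtain ⟨hs0, hs1⟩ := ht (j + 1)
    have hs0q : (0 : ℚ) < t (j + 1) := by exact_mod_cast hs0
    have hs1q : (t (j + 1) : ℚ) < a.den := by exact_mod_cast hs1
    have hfr : Int.fract (-(p : ℚ) ^ (M - 1 - j) * a) = t (j + 1) / a.den := by
      rw [Int.fract_eq_iff, hkM]
      refine ⟨by positivity, (div_lt_one hvq).mpr hs1q, -z, ?_⟩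
      have hzq : (t (j + 1) : ℚ) + (p : ℚ) ^ k * a.num = a.den * z := by exact_mod_cast hz
      push_cast
      rw [sub_eq_iff_eq_add]
      field_simp
      linear_combination -hzq - (p : ℚ) ^ k * ha
    rw [hfr, eq_comm, Int.floor_eq_iff, div_mul_eq_mul_div, le_div_iff₀ hvq, div_lt_iff₀ hvq]
    obtain ⟨hr0, hr1⟩ := ht j
    have hr0q : (0 : ℚ) < t j := by exact_mod_cast hr0
    have hr1q : (t j : ℚ) < a.den := by exact_mod_cast hr1
    have hd : (a.den : ℚ) * ((digit x j : ℤ) : ℚ) = p * t (j + 1) - t j := by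
      exact_mod_cast htd j
    constructor <;> linarith
  · have h1 := htd j
    rw [h0] at h1
    have hltz : (a.den : ℤ) < p := by exact_mod_cast hlt
    obtain ⟨hr0, hr1⟩ := ht j
    obtain ⟨hs0, hs1⟩ := ht (j + 1)
    push_cast at h1
    nlinarith
end

section
/- Let α = (α₁,…,α_n) and β = (β₁,…,β_{n−1}) be rational numbers in the open interval (0,1) with α_i ≠ β_j for all i, j, ordered so that α₁ ≤ α₂ ≤ … ≤ α_n and β₁ ≤ β₂ ≤ … ≤ β_{n−1}. Then B(α;β) is empty if and only if there exists an index i ∈ {1,…,n−1} with β_i < α_i. -/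
/-!
Only the exponent `j = 0` matters. As `{-x} = 1 - x` for `0 < x < 1`, it asks for a permutation `σ`
with `α (σ i) ≤ β i` for all `i`, whatever `u` is. If `β i < α i` for some `i`, such a `σ` would
inject the indices `≤ i` into the indices `< i`, by monotonicity; so no `u` works.
If `α i ≤ β i` for all `i`, then `u = 1` works, with `σ` the identity for every `j`.
-/

/-- Numerator majorization for the class of `u`. -/
def NumMajorized {n : ℕ} (α : Fin (n + 1) → ℚ) (β : Fin n → ℚ) (u : ℕ) : Prop :=
  ∀ j : ℕ, ∃ σ : Equiv.Perm (Fin (n + 1)), ∀ i : Fin n,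
    Int.fract (-(u : ℚ) ^ j * β i) ≤ Int.fract (-(u : ℚ) ^ j * α (σ i.castSucc))

theorem fract_neg_eq_one_sub {x : ℚ} (h : 0 < x ∧ x < 1) : Int.fract (-x) = 1 - x := by
  rw [Int.fract_eq_iff]
  exact ⟨by linarith [h.2], by linarith [h.1], -1, by push_cast; ring⟩

/-- Pigeonhole: a matching of the `β i` with distinct `α (σ i) ≤ β i` forces the sorted inequalities
`α i ≤ β i`. -/
theorem le_of_perm_le {n : ℕ} {α : Fin (n + 1) → ℚ} {β : Fin n → ℚ}
    (hα : Monotone α) (hβ : Monotone β) (σ : Equiv.Perm (Fin (n + 1)))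
    (h : ∀ i : Fin n, α (σ i.castSucc) ≤ β i) (i : Fin n) : α i.castSucc ≤ β i := by
  by_contra! hlt
  have hmap : ∀ k ∈ Finset.Iic i, σ k.castSucc ∈ Finset.Iio i.castSucc := by
    intro k hk
    rw [Finset.mem_Iio]
    by_contra! hle
    linarith [hα hle, h k, hβ (Finset.mem_Iic.mp hk)]
  have hcard := Finset.card_le_card_of_injOn (fun k : Fin n => σ k.castSucc) hmap
    ((σ.injective.comp (Fin.castSucc_injective n)).injOn)
  simp at hcard

theorem stmt4 (n : ℕ) (α : Fin (n + 1) → ℚ) (β : Fin n → ℚ)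
    (hα : ∀ i, 0 < α i ∧ α i < 1) (hβ : ∀ i, 0 < β i ∧ β i < 1)
    (hne : ∀ i j, α i ≠ β j)
    (hαmono : Monotone α) (hβmono : Monotone β)
    (N : ℕ)
    (hN : N = Nat.lcm (Finset.univ.lcm fun i => (α i).den)
                      (Finset.univ.lcm fun j => (β j).den)) :
    {u : (ZMod N)ˣ | NumMajorized α β ((u : ZMod N)).val} = ∅ ↔
      ∃ i : Fin n, β i < α i.castSucc := by
  constructor
  · intro hempty
    by_contra! hle
    -- In `ZMod 1` the representative of `1` would be `0`; but `0 < α 0 < 1` is not an integer.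
    have hN1 : N ≠ 1 := by
      intro h1
      have hdvd : (α 0).den ∣ N := by
        rw [hN]
        exact (Finset.dvd_lcm (f := fun i => (α i).den) (Finset.mem_univ 0)).trans
          (Nat.dvd_lcm_left _ _)
      rw [h1, Nat.dvd_one] at hdvd
      have hint : ((α 0).num : ℚ) = α 0 := Rat.coe_int_num_of_den_eq_one hdvd
      have h0 := hα 0
      rw [← hint] at h0
      have h2 : 0 < (α 0).num := by exact_mod_cast h0.1
      have h3 : (α 0).num < 1 := by exact_mod_cast h0.2
      omega
    have hmem : (1 : (ZMod N)ˣ) ∈ {u : (ZMod N)ˣ | NumMajorized α β ((u : ZMod N)).val} := by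
      intro j
      refine ⟨1, fun i => ?_⟩
      rw [Units.val_one, ZMod.val_one'' hN1]
      simp only [Nat.cast_one, one_pow, neg_one_mul, Equiv.Perm.one_apply]
      rw [fract_neg_eq_one_sub (hβ i), fract_neg_eq_one_sub (hα _)]
      linarith [hle i]
    rw [hempty] at hmem
    exact hmem
  · rintro ⟨i, hi⟩
    rw [Set.eq_empty_iff_forall_notMem]
    intro u hu
    obtain ⟨σ, hσ⟩ := hu 0
    refine absurd (le_of_perm_le hαmono hβmono σ (fun k => ?_) i) (not_le.mpr hi)
    have hk := hσ k
    rw [pow_zero, neg_one_mul, neg_one_mul, fract_neg_eq_one_sub (hβ k),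
      fract_neg_eq_one_sub (hα _)] at hk
    linarith
end

section
/- Let α₁,…,α_m and β₁,…,β_n be rational numbers, none of which is a nonpositive integer, and suppose m < n + 1. Then for every prime p such that all of the α_i and β_j lie in ℤ_p, the series ₘF_n(α;β;z) is p-adically unbounded, i.e. the p-adic valuations of its coefficients are not bounded below. -/
/-!
Evaluate the coefficients along `k = p ^ s` and compare each rising factorial with `k!` in `ℚ_[p]`.

* For `b ∈ ℤ_p` one has `‖(b)_k‖ ≤ ‖k!‖`, since `(b)_k / k!` is a binomial coefficient
  (`PadicInt.norm_ascPochhammer_le`).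
* For `a ∈ ℤ_p ∩ ℚ` not a nonpositive integer, `‖(a)_k‖ ≥ c ‖k!‖` with `c > 0` independent of `s`
  (`exists_norm_ascPochhammer_ge`). Indeed exactly one factor `a + M` with `0 ≤ M < p ^ s` is
  divisible by `p ^ s`. Every other factor `a + i` has the norm of `i - M`, so these factors
  contribute `‖M! (k - 1 - M)!‖ ≥ ‖(k - 1)!‖`. The remaining factor is a nonzero rational with
  fixed denominator and numerator of size `O(p ^ s)`, hence has norm at least `c p ^ (-s)`.

As `m ≤ n`, the coefficient `A_k` therefore has norm at least `C ‖k!‖ ^ (m - n - 1) ≥ C p ^ s`,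
which is unbounded in `s`.
-/

open scoped BigOperators

section HypergeometricBounds

variable {p : ℕ} [Fact p.Prime]

lemma ascPochhammer_eval_prod {R : Type*} [CommRing R] (k : ℕ) (x : R) :
    (ascPochhammer R k).eval x = ∏ i ∈ Finset.range k, (x + i) := by
  induction k with
  | zero => simp
  | succ k ih => rw [ascPochhammer_succ_eval, ih, Finset.prod_range_succ]

lemma ascPochhammer_eval_cast_padic (k : ℕ) (x : ℚ) :
    (((ascPochhammer ℚ k).eval x : ℚ) : ℚ_[p]) = ∏ i ∈ Finset.range k, ((x : ℚ_[p]) + i) := by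
  rw [ascPochhammer_eval_prod]
  push_cast
  rfl

lemma norm_ascPochhammer_le_factorial (b : ℚ) (hb : ‖(b : ℚ_[p])‖ ≤ 1) (k : ℕ) :
    ‖(((ascPochhammer ℚ k).eval b : ℚ) : ℚ_[p])‖ ≤ ‖(k.factorial : ℚ_[p])‖ := by
  obtain ⟨x, hx⟩ : ∃ x : ℤ_[p], (x : ℚ_[p]) = b := ⟨⟨(b : ℚ_[p]), hb⟩, rfl⟩
  have h := PadicInt.norm_ascPochhammer_le k x
  rw [ascPochhammer_eval_prod k x, PadicInt.norm_def, PadicInt.norm_def] at h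
  have e : ((∏ i ∈ Finset.range k, (x + (i : ℤ_[p])) : ℤ_[p]) : ℚ_[p])
      = ∏ i ∈ Finset.range k, ((b : ℚ_[p]) + i) := by
    change PadicInt.Coe.ringHom _ = _
    rw [map_prod]
    refine Finset.prod_congr rfl fun i _ => ?_
    rw [map_add, map_natCast, ← hx]
    rfl
  rw [ascPochhammer_eval_cast_padic, ← e]
  simpa using h

/-- The largest power of `p` dividing a nonzero integer `z` is at most `|z|`. -/
lemma inv_abs_le_norm_intCast (z : ℤ) (hz : z ≠ 0) :
    1 / |(z : ℝ)| ≤ ‖(z : ℚ_[p])‖ := by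
  have hz' : (z : ℚ_[p]) ≠ 0 := by exact_mod_cast hz
  have hv : ‖(z : ℚ_[p])‖ = (p : ℝ) ^ (-(padicValInt p z : ℤ)) := by
    rw [Padic.norm_eq_zpow_neg_valuation hz', Padic.valuation_intCast]
  have hp : (0 : ℝ) < p := by exact_mod_cast (Fact.out : p.Prime).pos
  have hdvd : ((p : ℤ) ^ padicValInt p z) ∣ z := padicValInt_dvd z
  have hle : ((p : ℤ) ^ padicValInt p z) ≤ |z| :=
    Int.le_of_dvd (abs_pos.mpr hz) ((dvd_abs _ _).mpr hdvd)
  have hle' : ((p : ℝ) ^ padicValInt p z) ≤ |(z : ℝ)| := by exact_mod_cast hle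
  rw [hv, zpow_neg, zpow_natCast, one_div]
  exact inv_anti₀ (pow_pos hp _) hle'

lemma norm_pow_lt_norm_natCast (s t : ℕ) (ht : 0 < t) (hts : t < p ^ s) :
    ‖((p ^ s : ℕ) : ℚ_[p])‖ < ‖(t : ℚ_[p])‖ := by
  by_contra! h
  have e : ‖((p ^ s : ℕ) : ℚ_[p])‖ = (p : ℝ) ^ (-(s : ℤ)) := by
    push_cast
    exact Padic.norm_p_pow s
  rw [e] at h
  have := (Padic.norm_int_le_pow_iff_dvd (p := p) (t : ℤ) s).mp (by simpa using h)
  have h2 : p ^ s ∣ t := by exact_mod_cast this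
  exact absurd (Nat.le_of_dvd ht h2) (by omega)

/-- A `p`-integral element is congruent to the negative of some `M < p ^ s` modulo `p ^ s`. -/
lemma exists_lt_norm_add_le (a : ℚ_[p]) (ha : ‖a‖ ≤ 1) (s : ℕ) :
    ∃ M < p ^ s, ‖a + (M : ℚ_[p])‖ ≤ ‖((p ^ s : ℕ) : ℚ_[p])‖ := by
  let x : ℤ_[p] := ⟨a, ha⟩
  refine ⟨(-x).appr s, PadicInt.appr_lt _ _, ?_⟩
  have h := (PadicInt.norm_le_pow_iff_mem_span_pow _ s).mpr (PadicInt.appr_spec s (-x))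
  have e : ‖((p ^ s : ℕ) : ℚ_[p])‖ = (p : ℝ) ^ (-(s : ℤ)) := by
    push_cast
    exact Padic.norm_p_pow s
  rw [e]
  rw [PadicInt.norm_def, ← norm_neg] at h
  have e2 : a + ((-x).appr s : ℚ_[p]) = ((-(-x - ((-x).appr s : ℤ_[p])) : ℤ_[p]) : ℚ_[p]) := by
    rw [PadicInt.coe_neg, PadicInt.coe_sub, PadicInt.coe_neg, PadicInt.coe_natCast]
    simp only [x]
    ring
  rw [e2]
  simpa using h

/-- The factors other than `a + M`, where `M ≡ -a` modulo `p ^ s`, contribute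
`M! (p ^ s - 1 - M)!` up to a unit, and this divides `(p ^ s - 1)!`. -/
lemma norm_prod_ge (a : ℚ_[p]) (s M : ℕ) (hM : M < p ^ s)
    (haM : ‖a + (M : ℚ_[p])‖ ≤ ‖((p ^ s : ℕ) : ℚ_[p])‖) :
    ‖(((p ^ s - 1).factorial : ℕ) : ℚ_[p])‖ * ‖a + (M : ℚ_[p])‖ ≤
      ‖∏ i ∈ Finset.range (p ^ s), (a + (i : ℚ_[p]))‖ := by
  obtain ⟨R, hR⟩ : ∃ R, p ^ s = M + 1 + R := ⟨p ^ s - (M + 1), by omega⟩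
  have hlow : ∀ i < M, ‖a + (i : ℚ_[p])‖ = ‖((M - i : ℕ) : ℚ_[p])‖ := by
    intro i hi
    have hlt := haM.trans_lt (norm_pow_lt_norm_natCast (p := p) s (M - i) (by omega) (by omega))
    have e : a + (i : ℚ_[p]) = (a + M) + -((M - i : ℕ) : ℚ_[p]) := by
      rw [Nat.cast_sub hi.le]; ring
    rw [e, Padic.add_eq_max_of_ne (by rw [norm_neg]; exact hlt.ne), norm_neg,
      max_eq_right hlt.le]
  have hhigh : ∀ j < R, ‖a + ((M + 1 + j : ℕ) : ℚ_[p])‖ = ‖((j + 1 : ℕ) : ℚ_[p])‖ := by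
    intro j hj
    have hlt := haM.trans_lt (norm_pow_lt_norm_natCast (p := p) s (j + 1) (by omega) (by omega))
    have e : a + ((M + 1 + j : ℕ) : ℚ_[p]) = (a + M) + ((j + 1 : ℕ) : ℚ_[p]) := by
      push_cast; ring
    rw [e, Padic.add_eq_max_of_ne hlt.ne, max_eq_right hlt.le]
  have h1 : ∏ i ∈ Finset.range M, ‖a + (i : ℚ_[p])‖ = ‖(M.factorial : ℚ_[p])‖ := by
    rw [Finset.prod_congr rfl (fun i hi => hlow i (Finset.mem_range.mp hi)), ← norm_prod,
      ← Nat.cast_prod, ← Finset.prod_range_add_one_eq_factorial,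
      ← Finset.prod_range_reflect (fun i => i + 1)]
    congr 2
    refine Finset.prod_congr rfl fun i hi => ?_
    have := Finset.mem_range.mp hi
    omega
  have h2 : ∏ j ∈ Finset.range R, ‖a + ((M + 1 + j : ℕ) : ℚ_[p])‖ = ‖(R.factorial : ℚ_[p])‖ := by
    rw [Finset.prod_congr rfl (fun i hi => hhigh i (Finset.mem_range.mp hi)), ← norm_prod,
      ← Nat.cast_prod, ← Finset.prod_range_add_one_eq_factorial]
  obtain ⟨q, hq⟩ := Nat.factorial_mul_factorial_dvd_factorial_add M R
  have hfac : (p ^ s - 1).factorial = M.factorial * R.factorial * q := by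
    rw [← hq]; congr 1; omega
  have hq1 : ‖(q : ℚ_[p])‖ ≤ 1 := by simpa using Padic.norm_int_le_one (p := p) (q : ℤ)
  rw [hfac, hR, norm_prod, Finset.prod_range_add, Finset.prod_range_succ, h1, h2]
  push_cast
  rw [norm_mul, norm_mul]
  have : ‖(M.factorial : ℚ_[p])‖ * ‖(R.factorial : ℚ_[p])‖ * ‖(q : ℚ_[p])‖ ≤
      ‖(M.factorial : ℚ_[p])‖ * ‖(R.factorial : ℚ_[p])‖ :=
    mul_le_of_le_one_right (by positivity) hq1
  calc _ ≤ ‖(M.factorial : ℚ_[p])‖ * ‖(R.factorial : ℚ_[p])‖ * ‖a + (M : ℚ_[p])‖ := by gcongr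
    _ = _ := by ring

/-- Away from the nonpositive integers, `(a)_k` for `k = p ^ s` is divisible by at most a bounded
power of `p` more than `k!`: only the factor divisible by `p ^ s` can exceed its share, and its
size bounds its divisibility. -/
lemma exists_norm_ascPochhammer_ge (a : ℚ) (ha : ¬ ∃ z : ℤ, z ≤ 0 ∧ a = (z : ℚ))
    (hap : ‖(a : ℚ_[p])‖ ≤ 1) :
    ∃ c : ℝ, 0 < c ∧ ∀ s : ℕ, c * ‖((p ^ s).factorial : ℚ_[p])‖ ≤
      ‖(((ascPochhammer ℚ (p ^ s)).eval a : ℚ) : ℚ_[p])‖ := by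
  have hden : (0 : ℝ) < a.den := by exact_mod_cast a.den_pos
  refine ⟨1 / (|(a.num : ℝ)| + a.den), by positivity, fun s => ?_⟩
  obtain ⟨M, hM, haM⟩ := exists_lt_norm_add_le (a : ℚ_[p]) hap s
  rw [ascPochhammer_eval_cast_padic]
  refine le_trans ?_ (norm_prod_ge _ s M hM haM)
  have hpos : 0 < p ^ s := pow_pos (Fact.out : p.Prime).pos s
  have hposR : (0 : ℝ) < (p : ℝ) ^ s := by exact_mod_cast hpos
  rw [← Nat.mul_factorial_pred hpos.ne', Nat.cast_mul, norm_mul]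
  -- the numerator of `a + M` over the denominator of `a`
  set z : ℤ := a.num + M * a.den with hz
  have hzQ : (z : ℚ) = (a + M) * a.den := by
    rw [hz, add_mul, Rat.mul_den_eq_num]; push_cast; ring
  have hz0 : z ≠ 0 := by
    intro h0
    rw [h0, Int.cast_zero, eq_comm, mul_eq_zero] at hzQ
    rcases hzQ with h | h
    · exact ha ⟨-M, by omega, by push_cast; linarith⟩
    · exact a.den_nz (by exact_mod_cast h)
  have hzle : ‖(z : ℚ_[p])‖ ≤ ‖(a : ℚ_[p]) + M‖ := by
    have e : (z : ℚ_[p]) = ((a : ℚ_[p]) + M) * ((a.den : ℤ) : ℚ_[p]) := by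
      exact_mod_cast congrArg (Rat.cast : ℚ → ℚ_[p]) hzQ
    rw [e, norm_mul]
    exact mul_le_of_le_one_right (norm_nonneg _) (Padic.norm_int_le_one _)
  have hzabs : |(z : ℝ)| ≤ (|(a.num : ℝ)| + a.den) * (p : ℝ) ^ s := by
    have hM' : (M : ℝ) ≤ (p : ℝ) ^ s := by exact_mod_cast hM.le
    have h1 : (1 : ℝ) ≤ (p : ℝ) ^ s := by exact_mod_cast hpos
    have e : (z : ℝ) = a.num + M * a.den := by rw [hz]; push_cast; ring
    rw [e, add_mul]
    refine (abs_add_le _ _).trans (add_le_add (le_mul_of_one_le_right (abs_nonneg _) h1) ?_)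
    rw [abs_of_nonneg (by positivity), mul_comm]
    gcongr
  have hzpos : 0 < |(z : ℝ)| := abs_pos.mpr (by exact_mod_cast hz0)
  have hK : ‖((p ^ s : ℕ) : ℚ_[p])‖ = 1 / (p : ℝ) ^ s := by
    push_cast
    rw [Padic.norm_p_pow, zpow_neg, zpow_natCast, one_div]
  have key : 1 / (|(a.num : ℝ)| + a.den) * ‖((p ^ s : ℕ) : ℚ_[p])‖ ≤ ‖(a : ℚ_[p]) + M‖ := by
    rw [hK, one_div_mul_one_div]
    exact (one_div_le_one_div_of_le hzpos hzabs).trans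
      ((inv_abs_le_norm_intCast z hz0).trans hzle)
  calc _ = ‖(((p ^ s - 1).factorial : ℕ) : ℚ_[p])‖ *
        (1 / (|(a.num : ℝ)| + a.den) * ‖((p ^ s : ℕ) : ℚ_[p])‖) := by ring
    _ ≤ _ := by gcongr

end HypergeometricBounds

theorem stmt7 (m n : ℕ) (hmn : m < n + 1) (α : Fin m → ℚ) (β : Fin n → ℚ)
    (hα : ∀ i, ¬ ∃ z : ℤ, z ≤ 0 ∧ α i = (z : ℚ))
    (hβ : ∀ j, ¬ ∃ z : ℤ, z ≤ 0 ∧ β j = (z : ℚ))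
    (p : ℕ) [Fact p.Prime]
    (hαp : ∀ i, ‖((α i : ℚ) : ℚ_[p])‖ ≤ 1)
    (hβp : ∀ j, ‖((β j : ℚ) : ℚ_[p])‖ ≤ 1) :
    ¬ ∃ C : ℤ, ∀ k : ℕ, C ≤ padicValRat p (hgCoeff m n α β k) := by
  rintro ⟨C, hC⟩
  choose c hc0 hc using fun i => exists_norm_ascPochhammer_ge (p := p) (α i) (hα i) (hαp i)
  have hp1 : (1 : ℝ) < p := by exact_mod_cast (Fact.out : p.Prime).one_lt
  have hcpos : 0 < ∏ i, c i := Finset.prod_pos fun i _ => hc0 i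
  have hlow : ∀ s : ℕ, (∏ i, c i) * (p : ℝ) ^ s ≤
      ‖((hgCoeff m n α β (p ^ s) : ℚ) : ℚ_[p])‖ := by
    intro s
    have hpos : 0 < p ^ s := pow_pos (Fact.out : p.Prime).pos s
    set F : ℝ := ‖((p ^ s).factorial : ℚ_[p])‖ with hF
    have hF0 : 0 < F := norm_pos_iff.mpr (by exact_mod_cast (p ^ s).factorial_ne_zero)
    have hF1 : F ≤ 1 := by
      simpa using Padic.norm_int_le_one (p := p) ((p ^ s).factorial : ℤ)
    have hFK : F ≤ ((p : ℝ) ^ s)⁻¹ := by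
      have h := (Padic.norm_int_le_pow_iff_dvd (p := p) ((p ^ s).factorial : ℤ) s).mpr
        (by exact_mod_cast Nat.dvd_factorial hpos le_rfl)
      rw [zpow_neg, zpow_natCast] at h
      simpa [hF] using h
    have hnum : (∏ i, c i) * F ^ m ≤
        ∏ i, ‖(((ascPochhammer ℚ (p ^ s)).eval (α i) : ℚ) : ℚ_[p])‖ := by
      have h := Finset.prod_le_prod (s := Finset.univ)
        (fun i _ => mul_nonneg (hc0 i).le hF0.le) (fun i _ => hc i s)
      simpa [Finset.prod_mul_distrib] using h
    have hdenle : ∏ j, ‖(((ascPochhammer ℚ (p ^ s)).eval (β j) : ℚ) : ℚ_[p])‖ ≤ F ^ n := by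
      have h := Finset.prod_le_prod (s := Finset.univ) (fun j _ => norm_nonneg _)
        (fun j _ => norm_ascPochhammer_le_factorial (p := p) (β j) (hβp j) (p ^ s))
      simpa using h
    -- no `(β j)_k` vanishes, so the quotient defining the coefficient is a genuine one
    have hdenpos : 0 < ∏ j, ‖(((ascPochhammer ℚ (p ^ s)).eval (β j) : ℚ) : ℚ_[p])‖ := by
      refine Finset.prod_pos fun j _ => ?_
      obtain ⟨d, hd0, hd⟩ := exists_norm_ascPochhammer_ge (p := p) (β j) (hβ j) (hβp j)
      exact (mul_pos hd0 hF0).trans_le (hd s)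
    have e : ‖((hgCoeff m n α β (p ^ s) : ℚ) : ℚ_[p])‖ =
        (∏ i, ‖(((ascPochhammer ℚ (p ^ s)).eval (α i) : ℚ) : ℚ_[p])‖) /
        ((∏ j, ‖(((ascPochhammer ℚ (p ^ s)).eval (β j) : ℚ) : ℚ_[p])‖) * F) := by
      simp only [hgCoeff, Rat.cast_div, Rat.cast_mul, Rat.cast_prod, Rat.cast_natCast, norm_div,
        norm_mul, norm_prod, hF]
    rw [e, le_div_iff₀ (mul_pos hdenpos hF0)]
    refine le_trans ?_ hnum
    have hps : (0 : ℝ) < (p : ℝ) ^ s := by positivity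
    have hFm : F ^ n ≤ F ^ m := pow_le_pow_of_le_one hF0.le hF1 (by omega)
    calc _ ≤ (∏ i, c i) * (p : ℝ) ^ s * (F ^ m * ((p : ℝ) ^ s)⁻¹) := by
          gcongr
          exact hdenle.trans hFm
      _ = _ := by field_simp
  have hup : ∀ s : ℕ, ‖((hgCoeff m n α β (p ^ s) : ℚ) : ℚ_[p])‖ ≤ (p : ℝ) ^ (-C) := by
    intro s
    have hne : hgCoeff m n α β (p ^ s) ≠ 0 := by
      intro h0
      have h := hlow s
      rw [h0, Rat.cast_zero, norm_zero] at h
      have : 0 < (∏ i, c i) * (p : ℝ) ^ s := by positivity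
      linarith
    rw [Padic.eq_padicNorm, padicNorm.eq_zpow_of_nonzero hne]
    push_cast
    exact zpow_le_zpow_right₀ hp1.le (neg_le_neg (hC _))
  obtain ⟨s, hs⟩ := pow_unbounded_of_one_lt ((p : ℝ) ^ (-C) / ∏ i, c i) hp1
  rw [div_lt_iff₀ hcpos] at hs
  have := (hlow s).trans (hup s)
  linarith
end

section
/- Let a, b, c be rational numbers with b ≠ 0, let D be a rational number that is not the square of a rational number, and assume c is not a nonpositive integer. Then there exists a finite set S of primes such that for every prime p ∉ S for which D is not a square in ℚ_p (i.e. p does not split in ℚ(√D)), the series F_D(a,b,c,z) is p-adically unbounded. -/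
/-!
The numerator factor of index `j` is `P(−j) = (j + a)² − b²D`. For all but finitely many primes `p`
the numbers `a`, `c` are `p`-integral, `b`, `D` are `p`-adic units and `p` is odd. For such `p`,
if `p` divided some `P(−j)`, then `b²D` would be a unit congruent to a square modulo `p`, hence a
square in `ℤ_p` by Hensel's lemma (`exists_sq_eq_of_norm_sub_lt_one`), and `D` would be a square in
`ℚ_p`. So when `D` is not a square in `ℚ_p` the numerator of every coefficient is a `p`-adic unit
(`padicValRat_factor_eq_zero`), while the denominator `(c)_n · n!` is `p`-integral and has
valuation at least that of `n!`. The latter is unbounded in `n`, so the valuations of the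
coefficients tend to `−∞`.
-/

open scoped BigOperators

/-- The `n`-th coefficient of `F_D(a,b,c,z) = ₂F₁(a+b√D, a−b√D; c; z)`,
namely `(∏_{j<n} P(−j)) / ((c)_n · n!)` where `P(x) = x² − 2ax + a² − b²D`. -/
noncomputable def FDcoeff (a b c D : ℚ) (n : ℕ) : ℚ :=
  (∏ j ∈ Finset.range n, ((-(j : ℚ)) ^ 2 - 2 * a * (-(j : ℚ)) + a ^ 2 - b ^ 2 * D)) /
    ((ascPochhammer ℚ n).eval c * (n.factorial : ℚ))

/-- For odd `p`, a unit of `ℤ_p` congruent to a square modulo `p` is a square. -/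
lemma exists_sq_eq_of_norm_sub_lt_one {p : ℕ} [Fact p.Prime] (hp2 : p ≠ 2) {x y : ℤ_[p]}
    (hy : ‖y‖ = 1) (hxy : ‖x ^ 2 - y‖ < 1) : ∃ z : ℤ_[p], z ^ 2 = y := by
  have hp : p.Prime := Fact.out
  have h2 : ‖(2 : ℤ_[p])‖ = 1 := by
    have h : ‖((2 : ℕ) : ℚ_[p])‖ = 1 := by
      rw [Padic.norm_natCast_eq_one_iff]
      exact (Nat.coprime_primes hp Nat.prime_two).2 hp2
    rw [PadicInt.norm_def]
    exact_mod_cast h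
  have hx2 : ‖x ^ 2‖ = 1 := by
    by_contra hne
    have hlt : ‖x ^ 2‖ < 1 := lt_of_le_of_ne (PadicInt.norm_le_one _) hne
    have h := PadicInt.nonarchimedean (x ^ 2) (-(x ^ 2 - y))
    rw [norm_neg, show x ^ 2 + -(x ^ 2 - y) = y by ring, hy] at h
    exact absurd h (not_le.2 (max_lt hlt hxy))
  have hx : ‖x‖ = 1 := by
    rw [norm_pow] at hx2
    exact (pow_eq_one_iff_of_nonneg (norm_nonneg _) two_ne_zero).1 hx2
  obtain ⟨z, hz, -⟩ := hensels_lemma (p := p) (R := ℤ_[p])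
    (F := (Polynomial.X ^ 2 - Polynomial.C y : Polynomial ℤ_[p])) (a := x)
    (by simpa [h2, hx, one_add_one_eq_two] using hxy)
  exact ⟨z, by simpa [sub_eq_zero] using hz⟩

lemma norm_ratCast_eq_one {p : ℕ} [Fact p.Prime] {q : ℚ} (hd : ¬ p ∣ q.den)
    (hn : ¬ p ∣ q.num.natAbs) : ‖(q : ℚ_[p])‖ = 1 := by
  have h1 : ‖((q.num : ℤ) : ℚ_[p])‖ = 1 := by
    refine le_antisymm (Padic.norm_int_le_one _) (not_lt.1 fun h => hn ?_)
    exact Int.natCast_dvd.1 (Padic.norm_intCast_lt_one_iff.1 h)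
  have h2 : ‖((q.den : ℕ) : ℚ_[p])‖ = 1 :=
    Padic.norm_natCast_eq_one_iff.2 ((Fact.out : p.Prime).coprime_iff_not_dvd.2 hd)
  rw [Rat.cast_def, norm_div, h1, h2, div_one]

/-- If `D` is not a square in `ℚ_p`, then for `p` odd and prime to `a.den`, `b`, `D` the value
`P(−j)` is a `p`-adic unit. -/
lemma padicValRat_factor_eq_zero {p : ℕ} [Fact p.Prime] (hp2 : p ≠ 2) {a b D : ℚ}
    (ha : ¬ p ∣ a.den) (hb : ‖(b : ℚ_[p])‖ = 1) (hD : ‖(D : ℚ_[p])‖ = 1)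
    (hsq : ¬ ∃ s : ℚ_[p], s ^ 2 = (D : ℚ_[p])) (j : ℕ) :
    (-(j : ℚ)) ^ 2 - 2 * a * (-(j : ℚ)) + a ^ 2 - b ^ 2 * D ≠ 0 ∧
    padicValRat p ((-(j : ℚ)) ^ 2 - 2 * a * (-(j : ℚ)) + a ^ 2 - b ^ 2 * D) = 0 := by
  rw [show (-(j : ℚ)) ^ 2 - 2 * a * (-(j : ℚ)) + a ^ 2 - b ^ 2 * D
    = ((j : ℚ) + a) ^ 2 - b ^ 2 * D by ring]
  set q := ((j : ℚ) + a) ^ 2 - b ^ 2 * D with hq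
  obtain ⟨x, hx⟩ : ∃ x : ℤ_[p], (x : ℚ_[p]) = j + a := by
    let a' : ℤ_[p] := ⟨(a : ℚ_[p]), Padic.norm_rat_le_one ha⟩
    exact ⟨j + a', by rw [PadicInt.coe_add, PadicInt.coe_natCast]⟩
  have hb2 : ‖((b : ℚ_[p])) ^ 2 * (D : ℚ_[p])‖ = 1 := by simp [hb, hD]
  obtain ⟨y, hy⟩ : ∃ y : ℤ_[p], (y : ℚ_[p]) = (b : ℚ_[p]) ^ 2 * (D : ℚ_[p]) :=
    ⟨⟨_, hb2.le⟩, rfl⟩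
  rw [← hy, ← PadicInt.norm_def] at hb2
  have hqxy : (q : ℚ_[p]) = ((x ^ 2 - y : ℤ_[p]) : ℚ_[p]) := by
    rw [PadicInt.coe_sub, PadicInt.coe_pow, hx, hy, hq]
    push_cast
    rfl
  have hnorm : ‖(q : ℚ_[p])‖ = 1 := by
    rw [hqxy, ← PadicInt.norm_def]
    refine le_antisymm (PadicInt.norm_le_one _) (not_lt.1 fun hlt => hsq ?_)
    obtain ⟨z, hz⟩ := exists_sq_eq_of_norm_sub_lt_one hp2 hb2 hlt
    have hz' : (z : ℚ_[p]) ^ 2 = (b : ℚ_[p]) ^ 2 * (D : ℚ_[p]) := by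
      rw [← hy, ← hz, PadicInt.coe_pow]
    have hb0 : (b : ℚ_[p]) ≠ 0 := norm_ne_zero_iff.1 (by simp [hb])
    exact ⟨z / b, by rw [div_pow, hz']; field_simp⟩
  have hq0 : q ≠ 0 := by
    rintro h
    simp [h] at hnorm
  refine ⟨hq0, le_antisymm ?_ ?_⟩
  · have h : 0 ≤ padicValRat p q⁻¹ := by
      rw [← Padic.valuation_ratCast, ← Padic.norm_le_one_iff_val_nonneg]
      simp [hnorm]
    rw [padicValRat.inv] at h
    linarith
  · rw [← Padic.valuation_ratCast, ← Padic.norm_le_one_iff_val_nonneg]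
    exact hnorm.le

lemma padicValRat_prod_eq_zero {p : ℕ} [Fact p.Prime] {f : ℕ → ℚ}
    (hf : ∀ j, f j ≠ 0 ∧ padicValRat p (f j) = 0) (n : ℕ) :
    padicValRat p (∏ j ∈ Finset.range n, f j) = 0 := by
  induction n with
  | zero => simp
  | succ n ih =>
    rw [Finset.prod_range_succ, padicValRat.mul
      (Finset.prod_ne_zero_iff.2 fun j _ => (hf j).1) (hf n).1, ih, (hf n).2, add_zero]

lemma padicValRat_ascPochhammer_nonneg {p : ℕ} [Fact p.Prime] {c : ℚ} (hc : ¬ p ∣ c.den) (n : ℕ) :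
    0 ≤ padicValRat p ((ascPochhammer ℚ n).eval c) := by
  rw [← Padic.valuation_ratCast, ← Padic.norm_le_one_iff_val_nonneg]
  induction n with
  | zero => simp
  | succ n ih =>
    rw [ascPochhammer_succ_eval, Rat.cast_mul, norm_mul]
    refine mul_le_one₀ ih (norm_nonneg _) ?_
    rw [Rat.cast_add]
    refine (Padic.nonarchimedean _ _).trans (max_le (Padic.norm_rat_le_one hc) ?_)
    rw [Rat.cast_natCast]
    exact_mod_cast Padic.norm_int_le_one (p := p) n

theorem stmt8 (a b c D : ℚ) (hb : b ≠ 0) (hD : ¬ ∃ r : ℚ, r ^ 2 = D)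
    (hc : ¬ ∃ z : ℤ, z ≤ 0 ∧ c = (z : ℚ)) :
    ∃ S : Finset ℕ, ∀ (p : ℕ) [Fact p.Prime], p ∉ S →
      (¬ ∃ s : ℚ_[p], s ^ 2 = (D : ℚ_[p])) →
      ¬ ∃ C : ℤ, ∀ n : ℕ, C ≤ padicValRat p (FDcoeff a b c D n) := by
  have hD0 : D ≠ 0 := fun h => hD ⟨0, by simp [h]⟩
  refine ⟨{2} ∪ a.den.primeFactors ∪ b.den.primeFactors ∪ b.num.natAbs.primeFactors ∪
    D.den.primeFactors ∪ D.num.natAbs.primeFactors ∪ c.den.primeFactors, ?_⟩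
  intro p hpF hpS hsq
  have hp : p.Prime := hpF.out
  simp only [Finset.mem_union, Finset.mem_singleton, Nat.mem_primeFactors, hp, true_and, ne_eq,
    Rat.den_ne_zero, not_false_eq_true, and_true, Int.natAbs_eq_zero, Rat.num_eq_zero, hb, hD0,
    not_or] at hpS
  obtain ⟨⟨⟨⟨⟨⟨hp2, had⟩, hbd⟩, hbn⟩, hDd⟩, hDn⟩, hcd⟩ := hpS
  have hfac := padicValRat_factor_eq_zero hp2 had (norm_ratCast_eq_one hbd hbn)
    (norm_ratCast_eq_one hDd hDn) hsq
  rintro ⟨C, hC⟩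
  set k : ℕ := C.natAbs + 1 with hk
  -- The index `n = p ^ k` is convenient because `p ^ k` visibly divides `n!`.
  specialize hC (p ^ k)
  have hpoch : (ascPochhammer ℚ (p ^ k)).eval c ≠ 0 := by
    rw [ne_eq, ascPochhammer_eval_eq_zero_iff]
    rintro ⟨m, -, hm⟩
    exact hc ⟨-m, by simp, by push_cast; linarith⟩
  have hfact : (((p ^ k).factorial : ℕ) : ℚ) ≠ 0 := by
    exact_mod_cast Nat.factorial_ne_zero _
  have hkv : (k : ℤ) ≤ padicValRat p (((p ^ k).factorial : ℕ) : ℚ) := by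
    rw [padicValRat.of_nat]
    exact_mod_cast (padicValNat_dvd_iff_le (Nat.factorial_ne_zero _)).1
      (Nat.dvd_factorial (pow_pos hp.pos k) le_rfl)
  have hv := padicValRat_ascPochhammer_nonneg hcd (p ^ k)
  rw [FDcoeff, padicValRat.div (Finset.prod_ne_zero_iff.2 fun j _ => (hfac j).1)
    (mul_ne_zero hpoch hfact), padicValRat_prod_eq_zero hfac, padicValRat.mul hpoch hfact] at hC
  omega
end

section
/- Let a ∈ ℚ with 2a ∈ ℤ, let b ∈ ℚ be nonzero, let c ∈ ℚ not be a nonpositive integer, and let D be a nonsquare integer with K = ℚ(√D). Let M be the least common multiple of the denominator of c and twice the discriminant of K. Suppose u ∈ (ℤ/Mℤ)^× satisfies {−u^j c} ≤ 1/2 for every integer j ≥ 0. Then for all but finitely many primes p ≡ u (mod M) such that D is a square in ℚ_p, the series F_D(a,b,c,z) is p-adically bounded. -/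
/-!
For all large `p` as in the statement, every coefficient `A_n` is `p`-integral.

Put `α = a + b√D` and `β = a - b√D` in `ℤ_p`, with `α + β = m` where `m = 2a` is an integer. For
`q = p ^ k` let `r₁, r₂, r` be the residues in `[0, q)` of `-α, -β, -c`. By Legendre-type counting,
`ν_p(A_n)` is the sum over `k ≥ 1` of `[r₁ < n % q] + [r₂ < n % q] - [r < n % q]`, so it suffices that
`min r₁ r₂ ≤ r` for every `k`.

* The fractional-part condition forces `r ≥ q / 2 - c` (`den_le_two_mul`): up to integers `(r + c) / q`
  is `u ^ (-k) * c`, and `u ^ (-k)` is a nonnegative power of `u` modulo the denominator of `c`.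
* As `r₁ + r₂ ≡ -m (mod q)`, if both roots exceeded `r` then `2 * r₁` would lie within a constant of a
  multiple of `q`, so `p` would divide one of finitely many integers. These are nonzero since `√D` is
  irrational and `b ≠ 0`, so this fails for large `p` (`min_root_le`).

Everything is done with integers: `α` and `β` enter through the roots modulo `q` of
`(b₂ (2 j + m))² - 4 b₁² D = 4 b₂² P(-j)`, where `b = b₁ / b₂`. The quadratic splits modulo `q` because
`D` is a square in `ℚ_p`.
-/

open scoped BigOperators

/-! ### Square roots modulo prime powers -/

theorem exists_sq_mod (p : ℕ) [Fact p.Prime] (D : ℤ) (s : ℚ_[p]) (hs : s ^ 2 = (D : ℚ_[p]))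
    (k : ℕ) : ∃ σ : ℤ, (p : ℤ) ^ k ∣ σ ^ 2 - D := by
  have hnorm : ‖s‖ ≤ 1 := by
    have h : ‖s‖ ^ 2 ≤ 1 := by
      rw [← norm_pow, hs]
      exact Padic.norm_int_le_one D
    exact (pow_le_one_iff_of_nonneg (norm_nonneg s) two_ne_zero).mp h
  let x : ℤ_[p] := ⟨s, hnorm⟩
  have hx : x ^ 2 = (D : ℤ_[p]) := by
    apply Subtype.ext
    push_cast
    exact hs
  refine ⟨x.appr k, ?_⟩
  have h1 : (p : ℤ_[p]) ^ k ∣ x - x.appr k :=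
    Ideal.mem_span_singleton.mp (PadicInt.appr_spec k x)
  have h2 : (p : ℤ_[p]) ^ k ∣ (((x.appr k : ℤ) ^ 2 - D : ℤ) : ℤ_[p]) := by
    have : (((x.appr k : ℤ) ^ 2 - D : ℤ) : ℤ_[p])
        = (x - x.appr k) * (-(x + x.appr k)) := by
      push_cast
      rw [← hx]
      ring
    rw [this]
    exact h1.mul_right _
  exact (PadicInt.pow_p_dvd_int_iff k _).mp h2

/-! ### Valuations of products and counting in residue classes -/

/-- Legendre's formula for a product: the valuation of `∏ f j` counts, for each `k ≥ 1`, the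
indices `j` with `p ^ k ∣ f j`. The cutoff `B` only makes the sum finite. -/
theorem padicValInt_prod (p : ℕ) [Fact p.Prime] (f : ℕ → ℤ) (n B : ℕ)
    (h0 : ∀ j < n, f j ≠ 0) (hB : ∀ j < n, (f j).natAbs < p ^ B) :
    padicValInt p (∏ j ∈ Finset.range n, f j)
      = ∑ k ∈ Finset.Ico 1 B, ((Finset.range n).filter (fun j => (p : ℤ) ^ k ∣ f j)).card := by
  have hp : p.Prime := Fact.out
  have h1 : padicValInt p (∏ j ∈ Finset.range n, f j)
      = ∑ j ∈ Finset.range n, padicValInt p (f j) := by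
    clear hB
    induction n with
    | zero => simp
    | succ n ih =>
      rw [Finset.prod_range_succ, Finset.sum_range_succ, padicValInt.mul,
        ih fun j hj => h0 j (by omega)]
      · exact Finset.prod_ne_zero_iff.mpr fun j hj =>
          h0 j (by have := Finset.mem_range.mp hj; omega)
      · exact h0 n (by omega)
  rw [h1]
  simp_rw [Finset.card_filter]
  rw [Finset.sum_comm]
  refine Finset.sum_congr rfl fun j hj => ?_
  have hj := Finset.mem_range.mp hj
  rw [padicValInt, ← Nat.factorization_def _ hp,
    Nat.factorization_eq_card_pow_dvd_of_lt hp (Int.natAbs_pos.mpr (h0 j hj)) (hB j hj),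
    Finset.card_filter]
  refine Finset.sum_congr rfl fun k _ => ?_
  have : (p ^ k ∣ (f j).natAbs) ↔ ((p : ℤ) ^ k ∣ f j) := by
    rw [← Int.natCast_dvd]
    push_cast
    rfl
  simp only [this]

/-- Products can be compared prime power by prime power, by counting divisible factors. -/
theorem padicValInt_prod_le (p : ℕ) [Fact p.Prime] (Q L R : ℕ → ℤ) (n : ℕ)
    (hQ : ∀ j < n, Q j ≠ 0) (hL : ∀ j < n, L j ≠ 0) (hR : ∀ j < n, R j ≠ 0)
    (h : ∀ k, 1 ≤ k → ((Finset.range n).filter (fun j => (p : ℤ) ^ k ∣ L j)).card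
        + ((Finset.range n).filter (fun j => (p : ℤ) ^ k ∣ R j)).card
        ≤ ((Finset.range n).filter (fun j => (p : ℤ) ^ k ∣ Q j)).card) :
    padicValInt p (∏ j ∈ Finset.range n, L j) + padicValInt p (∏ j ∈ Finset.range n, R j)
      ≤ padicValInt p (∏ j ∈ Finset.range n, Q j) := by
  have hp : p.Prime := Fact.out
  let B := ∑ j ∈ Finset.range n, ((Q j).natAbs + (L j).natAbs + (R j).natAbs)
  have hB : ∀ j < n, (Q j).natAbs + (L j).natAbs + (R j).natAbs < p ^ B := fun j hj =>
    (Finset.single_le_sum (f := fun j => (Q j).natAbs + (L j).natAbs + (R j).natAbs)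
      (fun _ _ => Nat.zero_le _) (Finset.mem_range.mpr hj)).trans_lt (Nat.lt_pow_self hp.one_lt)
  rw [padicValInt_prod p Q n B hQ fun j hj => by have := hB j hj; omega,
    padicValInt_prod p L n B hL fun j hj => by have := hB j hj; omega,
    padicValInt_prod p R n B hR fun j hj => by have := hB j hj; omega, ← Finset.sum_add_distrib]
  exact Finset.sum_le_sum fun k hk => h k (Finset.mem_Ico.mp hk).1

theorem card_filter_modEq (q n r : ℕ) (hr : r < q) :
    ((Finset.range n).filter (fun j => j ≡ r [MOD q])).card
      = n / q + if r < n % q then 1 else 0 := by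
  rw [← Nat.count_eq_card_filter_range, Nat.count_modEq_card n (by omega) r,
    Nat.mod_eq_of_lt hr]

/-- Among the first `n` integers, a residue class mod `q` with representative `r < q` occurs
`n / q` times, plus once more if `r < n % q`. So if `Q` vanishes mod `q` on two distinct classes, one
of whose representatives is at most that of the class of zeros of `L`, the zeros of `Q` outnumber
those of `L` and `R` together; the class `q - 1` of `R` never gains from the incomplete block. -/
theorem card_block_le (q : ℕ) (Q L R : ℕ → ℤ) (n r r₁ r₂ : ℕ)
    (hr : r < q) (hr₁ : r₁ < q) (hr₂ : r₂ < q) (hne : r₁ ≠ r₂) (hmin : r₁ ≤ r ∨ r₂ ≤ r)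
    (hQ₁ : ∀ j, j ≡ r₁ [MOD q] → (q : ℤ) ∣ Q j) (hQ₂ : ∀ j, j ≡ r₂ [MOD q] → (q : ℤ) ∣ Q j)
    (hL : ∀ j, (q : ℤ) ∣ L j → j ≡ r [MOD q])
    (hR : ∀ j, (q : ℤ) ∣ R j → j ≡ q - 1 [MOD q]) :
    ((Finset.range n).filter (fun j => (q : ℤ) ∣ L j)).card
        + ((Finset.range n).filter (fun j => (q : ℤ) ∣ R j)).card
        ≤ ((Finset.range n).filter (fun j => (q : ℤ) ∣ Q j)).card := by
  have eL : ((Finset.range n).filter (fun j => (q : ℤ) ∣ L j)).card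
      ≤ n / q + if r < n % q then 1 else 0 := by
    rw [← card_filter_modEq q n r hr]
    exact Finset.card_le_card (Finset.monotone_filter_right _ fun j _ => hL j)
  have hmod : n % q < q := Nat.mod_lt _ (by omega)
  have eR : ((Finset.range n).filter (fun j => (q : ℤ) ∣ R j)).card ≤ n / q := by
    have h := card_filter_modEq q n (q - 1) (by omega)
    rw [if_neg (by omega), add_zero] at h
    rw [← h]
    exact Finset.card_le_card (Finset.monotone_filter_right _ fun j _ => hR j)
  have eQ : (n / q + if r₁ < n % q then 1 else 0) + (n / q + if r₂ < n % q then 1 else 0)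
      ≤ ((Finset.range n).filter (fun j => (q : ℤ) ∣ Q j)).card := by
    rw [← card_filter_modEq q n r₁ hr₁, ← card_filter_modEq q n r₂ hr₂,
      ← Finset.card_union_of_disjoint]
    · refine Finset.card_le_card fun j hj => ?_
      simp only [Finset.mem_union, Finset.mem_filter] at hj ⊢
      rcases hj with ⟨hj, h⟩ | ⟨hj, h⟩
      · exact ⟨hj, hQ₁ j h⟩
      · exact ⟨hj, hQ₂ j h⟩
    · rw [Finset.disjoint_left]
      intro j h1 h2
      have h := (Finset.mem_filter.mp h1).2.symm.trans (Finset.mem_filter.mp h2).2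
      exact hne (Nat.ModEq.eq_of_lt_of_lt h hr₁ hr₂)
  split_ifs at eL eQ <;> omega

/-! ### Location of the roots modulo `p ^ k` -/

/-- Nonvanishing form of the irrationality of `√D`. -/
theorem sq_sub_ne_zero (D b₁ b₂ : ℤ) (hD : ¬ IsSquare D) (hb₁ : b₁ ≠ 0) (w : ℤ) :
    (b₂ * w) ^ 2 - 4 * b₁ ^ 2 * D ≠ 0 := by
  intro h
  have h1 : (b₂ * w) ^ 2 = (2 * b₁) ^ 2 * D := by linarith
  have h2 : 2 * b₁ ∣ b₂ * w := (Int.pow_dvd_pow_iff two_ne_zero).mp ⟨D, h1⟩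
  obtain ⟨t, ht⟩ := h2
  rw [ht, mul_pow] at h1
  have h3 : t ^ 2 = D := mul_left_cancel₀ (by positivity) h1
  exact hD ⟨t, by rw [← h3]; ring⟩

/-- If `r₁ + r₂ ≡ -m (mod q)` and `r` is at least `q / 2` up to a constant, then one of the roots
`r₁`, `r₂` is at most `r`. Otherwise both exceed `r`, which pins `2 * r₁` to within a constant of `q` or
of `2 * q`; then `p` divides the value of `(b₂ w)² - 4 b₁² D` at a bounded `w`, which is nonzero and
smaller than `p`. -/
theorem min_root_le (p : ℕ) (q D b₁ b₂ m A N r r₁ r₂ : ℤ) (hD : ¬ IsSquare D) (hb₁ : b₁ ≠ 0)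
    (hpq : (p : ℤ) ∣ q) (hq : 2 * |A| + |m| < q) (hN : 1 ≤ N)
    (hp : b₂ ^ 2 * (3 * |m| + 2 * |A|) ^ 2 + 4 * b₁ ^ 2 * |D| < p)
    (hr₁ : r₁ < q) (hr₂ : r₂ < q)
    (hQ₁ : q ∣ (b₂ * (2 * r₁ + m)) ^ 2 - 4 * b₁ ^ 2 * D)
    (hsum : q ∣ r₁ + r₂ + m) (hr : N * q ≤ 2 * (N * r + A)) : r₁ ≤ r ∨ r₂ ≤ r := by
  by_contra! hcon
  obtain ⟨h1, h2⟩ := hcon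
  have hA := le_abs_self A
  have hA0 := abs_nonneg A
  have hm := le_abs_self m
  have hm' := neg_abs_le m
  have hm0 := abs_nonneg m
  have h2r : q - 2 * |A| ≤ 2 * r := by nlinarith
  obtain ⟨s, hs⟩ := hsum
  have hs1 : 0 < s := by nlinarith
  have hs2 : s < 3 := by nlinarith
  set w := 2 * r₁ - s * q + m with hw
  have hwb : |w| ≤ 3 * |m| + 2 * |A| := by
    rw [abs_le]
    have : s = 1 ∨ s = 2 := by omega
    rcases this with rfl | rfl <;> constructor <;> linarith
  have hdvd : (p : ℤ) ∣ (b₂ * w) ^ 2 - 4 * b₁ ^ 2 * D := by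
    have e : (b₂ * w) ^ 2 - 4 * b₁ ^ 2 * D = ((b₂ * (2 * r₁ + m)) ^ 2 - 4 * b₁ ^ 2 * D)
        + q * (b₂ ^ 2 * s * (s * q - 2 * (2 * r₁ + m))) := by
      rw [hw]; ring
    rw [e]
    exact dvd_add (hpq.trans hQ₁) (hpq.mul_right _)
  have hlt : |(b₂ * w) ^ 2 - 4 * b₁ ^ 2 * D| < (p : ℤ) := by
    refine lt_of_le_of_lt ?_ hp
    refine (abs_sub _ _).trans ?_
    rw [abs_mul, abs_of_nonneg (by positivity : (0 : ℤ) ≤ (b₂ * w) ^ 2),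
      abs_of_nonneg (by positivity : (0 : ℤ) ≤ 4 * b₁ ^ 2), mul_pow, ← sq_abs w]
    gcongr
  exact sq_sub_ne_zero D b₁ b₂ hD hb₁ w (Int.eq_zero_of_abs_lt_dvd hdvd hlt)

/-- Here `r` is the residue of `-c` modulo `p ^ k` and `t / c.den = (r + c) / p ^ k`. Modulo
`c.den` one has `t ≡ u ^ (-k) * c.num`, so for `0 < t < c.den` the hypothesis on fractional parts says
`1 - t / c.den ≤ 1 / 2`. The value `t = 0` would make `c` a nonpositive integer. -/
theorem den_le_two_mul (c : ℚ) (hc : ¬ ∃ z : ℤ, z ≤ 0 ∧ c = (z : ℚ)) (u p k : ℕ)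
    (hu : Nat.Coprime u c.den) (hcond : ∀ j : ℕ, Int.fract (-(u : ℚ) ^ j * c) ≤ 1 / 2)
    (hpu : p ≡ u [MOD c.den]) (hA : |c.num| < (p : ℤ) ^ k) (r t : ℤ) (hr : 0 ≤ r)
    (h : c.den * r + c.num = (p : ℤ) ^ k * t) : (c.den : ℤ) ≤ 2 * t := by
  have hN : (0 : ℤ) < c.den := by exact_mod_cast c.den_pos
  have hq : (0 : ℤ) < (p : ℤ) ^ k := lt_of_le_of_lt (abs_nonneg _) hA
  have hA' := neg_abs_le c.num
  have ht0 : 0 ≤ t := by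
    have : 0 ≤ (c.den : ℤ) * r := by positivity
    by_contra! hneg
    nlinarith
  have htne : t ≠ 0 := by
    rintro rfl
    refine hc ⟨-r, by omega, ?_⟩
    have e : c.num = -r * c.den := by linarith
    conv_lhs => rw [← Rat.num_div_den c, e]
    have : (c.den : ℚ) ≠ 0 := by exact_mod_cast c.den_ne_zero
    push_cast
    field_simp
  rcases le_or_gt (c.den : ℤ) t with hlarge | htN
  · linarith
  -- `u ^ J` is inverse to `u ^ k` modulo `c.den`, by Euler's theorem.
  set J := k * (Nat.totient c.den - 1) with hJ
  have hφ : 0 < Nat.totient c.den := Nat.totient_pos.mpr c.den_pos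
  have hexp : J + k = Nat.totient c.den * k := by
    rw [hJ, ← Nat.mul_succ, mul_comm]
    congr 1
    omega
  have h1 : (u : ℤ) ^ J * (u : ℤ) ^ k ≡ 1 [ZMOD c.den] := by
    have := (Nat.ModEq.pow_totient hu).pow k
    rw [← pow_mul, ← hexp, pow_add, one_pow] at this
    exact_mod_cast (Int.natCast_modEq_iff.mpr this)
  have h2 : (p : ℤ) ^ k ≡ (u : ℤ) ^ k [ZMOD c.den] := (Int.natCast_modEq_iff.mpr hpu).pow k
  have h3 : c.num ≡ (p : ℤ) ^ k * t [ZMOD c.den] := by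
    rw [← h]
    exact (Int.modEq_iff_dvd.mpr ⟨r, by ring⟩)
  have h4 : (u : ℤ) ^ J * c.num ≡ t [ZMOD c.den] :=
    calc (u : ℤ) ^ J * c.num ≡ (u : ℤ) ^ J * ((u : ℤ) ^ k * t) [ZMOD c.den] :=
          (h3.trans (h2.mul_right t)).mul_left _
      _ = (u : ℤ) ^ J * (u : ℤ) ^ k * t := by ring
      _ ≡ 1 * t [ZMOD c.den] := h1.mul_right t
      _ = t := one_mul t
  obtain ⟨z, hz⟩ := (Int.modEq_iff_dvd.mp h4)
  have hNQ : (0 : ℚ) < c.den := by exact_mod_cast c.den_pos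
  have htQ : (0 : ℚ) < t := by exact_mod_cast (lt_of_le_of_ne ht0 htne.symm)
  have htNQ : (t : ℚ) < c.den := by exact_mod_cast htN
  have hfr : Int.fract (-(u : ℚ) ^ J * c) = (c.den - t) / c.den := by
    rw [Int.fract_eq_iff]
    refine ⟨by apply div_nonneg <;> linarith, by rw [div_lt_one hNQ]; linarith, z - 1, ?_⟩
    have hzQ : (t : ℚ) - u ^ J * c.num = c.den * z := by exact_mod_cast hz
    have hcd : c * c.den = c.num := Rat.mul_den_eq_num c
    push_cast
    field_simp
    linear_combination hzQ - (u : ℚ) ^ J * hcd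
  have hle := hcond J
  rw [hfr, div_le_div_iff₀ hNQ two_pos] at hle
  have : (c.den : ℚ) ≤ 2 * t := by linarith
  exact_mod_cast this

/-- Solutions of `x * j + y ≡ 0 (mod q)`, for `x` invertible mod `q`, form one residue class. -/
theorem exists_linear_root (q : ℕ) (hq : 0 < q) (x y : ℤ) (h : IsCoprime x (q : ℤ)) :
    ∃ r : ℕ, r < q ∧ ∀ j : ℕ, j ≡ r [MOD q] ↔ (q : ℤ) ∣ x * j + y := by
  obtain ⟨v, w, hvw⟩ := h
  have hq' : (q : ℤ) ≠ 0 := by exact_mod_cast hq.ne'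
  have hnn := Int.emod_nonneg (-(v * y)) hq'
  have hlt := Int.emod_lt_of_pos (-(v * y)) (by exact_mod_cast hq : (0 : ℤ) < q)
  obtain ⟨r, hr⟩ := Int.eq_ofNat_of_zero_le hnn
  refine ⟨r, by omega, fun j => ?_⟩
  have hrm : (r : ℤ) ≡ -(v * y) [ZMOD q] := by rw [← hr]; exact Int.mod_modEq _ _
  rw [← Int.natCast_modEq_iff]
  constructor
  · intro hj
    obtain ⟨z, hz⟩ := Int.modEq_iff_dvd.mp (hj.trans hrm)
    exact ⟨w * y - x * z, by linear_combination -x * hz - y * hvw⟩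
  · rintro ⟨z, hz⟩
    refine Int.ModEq.trans ?_ hrm.symm
    exact Int.modEq_iff_dvd.mpr ⟨-(w * j + v * z), by linear_combination (-v) * hz + j * hvw⟩

/-! ### Comparison of the numerator and the denominator -/

/-- For each `k ≥ 1`, the factors `4 b₂² P(-j)` divisible by `p ^ k` are at least as many as those
of `(c)_n` and `n!` together. A square root `σ` of `D` mod `p ^ k` splits the quadratic into linear
factors with distinct roots summing to `-m`. -/
theorem card_le (c : ℚ) (hc : ¬ ∃ z : ℤ, z ≤ 0 ∧ c = (z : ℚ)) (u p k : ℕ) [Fact p.Prime]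
    (hu : Nat.Coprime u c.den) (hcond : ∀ j : ℕ, Int.fract (-(u : ℚ) ^ j * c) ≤ 1 / 2)
    (hpu : p ≡ u [MOD c.den]) (D b₁ b₂ m : ℤ) (hD : ¬ IsSquare D) (hb₁ : b₁ ≠ 0) (hb₂ : b₂ ≠ 0)
    (hk : 1 ≤ k) (hp1 : 2 * |c.num| + |m| < p)
    (hp2 : b₂ ^ 2 * (3 * |m| + 2 * |c.num|) ^ 2 + 4 * b₁ ^ 2 * |D| < p)
    (hp3 : 2 * |b₂| < p) (hpN : c.den < p)
    (s : ℚ_[p]) (hs : s ^ 2 = (D : ℚ_[p])) (n : ℕ) :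
    ((Finset.range n).filter (fun j : ℕ => (p : ℤ) ^ k ∣ c.den * (j : ℤ) + c.num)).card
      + ((Finset.range n).filter (fun j : ℕ => (p : ℤ) ^ k ∣ (j : ℤ) + 1)).card
      ≤ ((Finset.range n).filter
          (fun j : ℕ => (p : ℤ) ^ k ∣ (b₂ * (2 * (j : ℤ) + m)) ^ 2 - 4 * b₁ ^ 2 * D)).card := by
  have hp : p.Prime := Fact.out
  have hpI : Prime (p : ℤ) := Nat.prime_iff_prime_int.mp hp
  have hcop : ∀ x : ℤ, x ≠ 0 → |x| < (p : ℤ) → IsCoprime x ((p ^ k : ℕ) : ℤ) := by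
    intro x hx hxp
    push_cast
    refine IsCoprime.pow_right (IsCoprime.symm ?_)
    rw [hpI.coprime_iff_not_dvd]
    exact fun hd => hx (Int.eq_zero_of_abs_lt_dvd hd hxp)
  have hpq : (p : ℤ) ≤ (p : ℤ) ^ k := by
    exact_mod_cast Nat.le_self_pow (by omega) p
  have hpdvd : (p : ℤ) ∣ (p : ℤ) ^ k := dvd_pow_self _ (by omega)
  have hq0 : 0 < p ^ k := pow_pos hp.pos k
  have hDne : D ≠ 0 := by rintro rfl; exact hD ⟨0, rfl⟩
  have hA0 := abs_nonneg c.num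
  have hm0 := abs_nonneg m
  obtain ⟨σ, hσ⟩ := exists_sq_mod p D s hs k
  have h2b : IsCoprime (2 * b₂) ((p ^ k : ℕ) : ℤ) :=
    hcop _ (by simpa using hb₂) (by rw [abs_mul]; simpa using hp3)
  obtain ⟨r₁, hr₁, H₁⟩ := exists_linear_root (p ^ k) hq0 (2 * b₂) (b₂ * m - 2 * b₁ * σ) h2b
  obtain ⟨r₂, hr₂, H₂⟩ := exists_linear_root (p ^ k) hq0 (2 * b₂) (b₂ * m + 2 * b₁ * σ) h2b
  obtain ⟨r, hr, H⟩ := exists_linear_root (p ^ k) hq0 c.den c.num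
    (hcop _ (by exact_mod_cast c.den_ne_zero) (by rw [abs_of_nonneg (by positivity)]; exact_mod_cast hpN))
  have hQ : ∀ j : ℤ, (b₂ * (2 * j + m)) ^ 2 - 4 * b₁ ^ 2 * D
      = (2 * b₂ * j + (b₂ * m - 2 * b₁ * σ)) * (2 * b₂ * j + (b₂ * m + 2 * b₁ * σ))
        + (σ ^ 2 - D) * (4 * b₁ ^ 2) := fun j => by ring
  have hcast : ((p ^ k : ℕ) : ℤ) = (p : ℤ) ^ k := by push_cast; rfl
  have hQ₁ : ∀ j : ℕ, j ≡ r₁ [MOD p ^ k] →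
      ((p ^ k : ℕ) : ℤ) ∣ (b₂ * (2 * (j : ℤ) + m)) ^ 2 - 4 * b₁ ^ 2 * D := by
    intro j hj
    rw [hQ]
    exact dvd_add (((H₁ j).mp hj).mul_right _) (hcast ▸ hσ.mul_right _)
  have hQ₂ : ∀ j : ℕ, j ≡ r₂ [MOD p ^ k] →
      ((p ^ k : ℕ) : ℤ) ∣ (b₂ * (2 * (j : ℤ) + m)) ^ 2 - 4 * b₁ ^ 2 * D := by
    intro j hj
    rw [hQ]
    exact dvd_add (((H₂ j).mp hj).mul_left _) (hcast ▸ hσ.mul_right _)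
  have e₁ := (H₁ r₁).mp rfl
  have e₂ := (H₂ r₂).mp rfl
  have hsum : ((p ^ k : ℕ) : ℤ) ∣ r₁ + r₂ + m := by
    have h := dvd_add e₁ e₂
    refine h2b.symm.dvd_of_dvd_mul_left (?_ : _ ∣ 2 * b₂ * (r₁ + r₂ + m))
    rwa [show 2 * b₂ * (r₁ + r₂ + m) = (2 * b₂ * r₁ + (b₂ * m - 2 * b₁ * σ))
      + (2 * b₂ * r₂ + (b₂ * m + 2 * b₁ * σ)) by ring]
  -- Equal roots would give `p ∣ 4 * b₁ * σ`, hence `p ∣ 4 * (4 * b₁ ^ 2 * D)`, impossible for large `p`.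
  have hne : r₁ ≠ r₂ := by
    rintro rfl
    have h := (hpdvd.trans (hcast ▸ dvd_sub e₂ e₁))
    have h' : (p : ℤ) ∣ 2 * (2 * b₁) * σ := by
      rwa [show 2 * (2 * b₁) * σ = 2 * b₂ * r₁ + (b₂ * m + 2 * b₁ * σ)
        - (2 * b₂ * r₁ + (b₂ * m - 2 * b₁ * σ)) by ring]
    have hb0 : 0 ≤ b₂ ^ 2 * (3 * |m| + 2 * |c.num|) ^ 2 := by positivity
    have hsq : (p : ℤ) ∣ 4 * (4 * b₁ ^ 2 * D) := by
      have e : 4 * (4 * b₁ ^ 2 * D)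
          = (2 * (2 * b₁) * σ) * (2 * (2 * b₁) * σ) - (σ ^ 2 - D) * (16 * b₁ ^ 2) := by ring
      rw [e]
      exact dvd_sub (h'.mul_right _) ((hpdvd.trans hσ).mul_right _)
    have hnz : 4 * b₁ ^ 2 * D ≠ 0 := by positivity
    have hlt : |4 * b₁ ^ 2 * D| < (p : ℤ) := by
      rw [abs_mul, abs_of_nonneg (by positivity : (0 : ℤ) ≤ 4 * b₁ ^ 2)]
      linarith
    rcases hpI.dvd_or_dvd hsq with h4 | h4
    · have h4' : (p : ℤ) ∣ 2 := hpI.dvd_of_dvd_pow (n := 2) (by norm_num; exact h4)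
      have := Int.le_of_dvd two_pos h4'
      have : 1 ≤ |b₂| := Int.one_le_abs hb₂
      linarith
    · exact hnz (Int.eq_zero_of_abs_lt_dvd h4 hlt)
  obtain ⟨t, ht⟩ := (H r).mp rfl
  rw [hcast] at ht
  have h2t := den_le_two_mul c hc u p k hu hcond hpu (by linarith) r t (by positivity) ht
  have hmin : (r₁ : ℤ) ≤ r ∨ (r₂ : ℤ) ≤ r :=
    min_root_le p (p ^ k : ℕ) D b₁ b₂ m c.num c.den r r₁ r₂ hD hb₁ (hcast ▸ hpdvd)
      (by rw [hcast]; linarith) (by exact_mod_cast c.den_pos) hp2 (by exact_mod_cast hr₁)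
      (by exact_mod_cast hr₂) (hQ₁ r₁ rfl) hsum
      (by rw [hcast, ht]; nlinarith)
  have hmain := card_block_le (p ^ k)
    (fun j : ℕ => (b₂ * (2 * (j : ℤ) + m)) ^ 2 - 4 * b₁ ^ 2 * D)
    (fun j : ℕ => c.den * (j : ℤ) + c.num) (fun j : ℕ => (j : ℤ) + 1) n r r₁ r₂ hr hr₁ hr₂ hne
    (by exact_mod_cast hmin) hQ₁ hQ₂ (fun j => (H j).mpr) (by
      intro j hj
      rw [← Int.natCast_modEq_iff, Nat.cast_sub hq0]
      obtain ⟨z, hz⟩ := hj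
      exact Int.modEq_iff_dvd.mpr ⟨1 - z, by push_cast at hz ⊢; linear_combination -hz⟩)
  simpa only [hcast] using hmain

/-! ### The coefficients of the series -/

theorem den_mul_add_num_ne_zero (c : ℚ) (hc : ¬ ∃ z : ℤ, z ≤ 0 ∧ c = (z : ℚ)) (j : ℕ) :
    (c.den : ℤ) * j + c.num ≠ 0 := by
  intro h
  refine hc ⟨-j, by omega, ?_⟩
  have e : c.num = -j * c.den := by linarith
  conv_lhs => rw [← Rat.num_div_den c, e]
  have : (c.den : ℚ) ≠ 0 := by exact_mod_cast c.den_ne_zero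
  push_cast
  field_simp

theorem ascPochhammer_eval_eq_prod (c : ℚ) (n : ℕ) :
    (ascPochhammer ℚ n).eval c = ∏ j ∈ Finset.range n, (c + j) := by
  induction n with
  | zero => simp
  | succ n ih => rw [ascPochhammer_succ_eval, ih, Finset.prod_range_succ]

/-- The coefficient as a ratio of products of integers, all denominators cleared. -/
theorem FDcoeff_mul_eq (a b c : ℚ) (ha : (2 * a).den = 1)
    (hc : ¬ ∃ z : ℤ, z ≤ 0 ∧ c = (z : ℚ)) (D : ℤ) (n : ℕ) :
    FDcoeff a b c D n * (((4 * (b.den : ℤ) ^ 2) ^ n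
        * ((∏ j ∈ Finset.range n, ((c.den : ℤ) * (j : ℤ) + c.num))
          * ∏ j ∈ Finset.range n, ((j : ℤ) + 1)) : ℤ) : ℚ)
      = (((c.den : ℤ) ^ n * ∏ j ∈ Finset.range n,
        (((b.den : ℤ) * (2 * (j : ℤ) + (2 * a).num)) ^ 2 - 4 * b.num ^ 2 * D) : ℤ) : ℚ) := by
  have hm : ((2 * a).num : ℚ) = 2 * a := (Rat.den_eq_one_iff _).mp ha
  have hf : ((n.factorial : ℕ) : ℚ) = ∏ j ∈ Finset.range n, ((j : ℚ) + 1) := by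
    rw [← Finset.prod_range_add_one_eq_factorial]
    push_cast
    rfl
  have hN : (c.den : ℚ) ≠ 0 := by exact_mod_cast c.den_ne_zero
  have hB : (b.den : ℚ) ≠ 0 := by exact_mod_cast b.den_ne_zero
  have hpow : ∀ x : ℚ, x ^ n = ∏ _j ∈ Finset.range n, x := fun x => by simp
  unfold FDcoeff
  rw [ascPochhammer_eval_eq_prod, hf]
  push_cast
  rw [hpow, hpow, ← Finset.prod_mul_distrib, ← Finset.prod_mul_distrib, ← Finset.prod_mul_distrib,
    ← Finset.prod_mul_distrib, ← Finset.prod_div_distrib, ← Finset.prod_mul_distrib]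
  refine Finset.prod_congr rfl fun j _ => ?_
  have hL : (c.den : ℚ) * j + c.num ≠ 0 := by exact_mod_cast den_mul_add_num_ne_zero c hc j
  have hcL : (c.den : ℚ) * j + c.num = c.den * (c + j) := by
    nth_rewrite 4 [← Rat.num_div_den c]
    field_simp
    ring
  have hcj : c + j ≠ 0 := by
    intro h0
    rw [hcL, h0, mul_zero] at hL
    exact hL rfl
  have hbn : (b.num : ℚ) = b * b.den := (Rat.mul_den_eq_num b).symm
  have hj : (j : ℚ) + 1 ≠ 0 := by positivity
  rw [hcL, hm, hbn]
  field_simp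
  ring

/-! ### Boundedness -/

theorem stmt11 (a b c : ℚ) (ha : (2 * a).den = 1) (hb : b ≠ 0)
    (hc : ¬ ∃ z : ℤ, z ≤ 0 ∧ c = (z : ℚ))
    (D : ℤ) (hD : ¬ IsSquare D)
    -- `d` is the squarefree part of `D`, so that the discriminant of `K = ℚ(√D)` is
    -- `Δ = d` if `d ≡ 1 (mod 4)` and `Δ = 4d` otherwise.
    (d e : ℤ) (hd : Squarefree d) (hde : D = d * e ^ 2)
    (Δ : ℤ) (hΔ : Δ = if d % 4 = 1 then d else 4 * d)
    (M : ℕ) (hM : M = Nat.lcm c.den (2 * Δ).natAbs)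
    (u : ℕ) (hu : Nat.Coprime u M)
    (hcond : ∀ j : ℕ, Int.fract (-(u : ℚ) ^ j * c) ≤ 1 / 2) :
    ∃ S : Finset ℕ, ∀ (p : ℕ) [Fact p.Prime], p ∉ S → p ≡ u [MOD M] →
      (∃ s : ℚ_[p], s ^ 2 = (D : ℚ_[p])) →
      ∃ C : ℤ, ∀ n : ℕ, C ≤ padicValRat p (FDcoeff a b c (D : ℚ) n) := by
  set m := (2 * a).num with hm
  set X : ℤ := 2 * |c.num| + |m| with hX
  set Y : ℤ := (b.den : ℤ) ^ 2 * (3 * |m| + 2 * |c.num|) ^ 2 + 4 * b.num ^ 2 * |D| with hY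
  refine ⟨Finset.range (X.toNat + Y.toNat + 2 * b.den + c.den + 3), ?_⟩
  intro p _ hpS hpu hs
  obtain ⟨s, hs⟩ := hs
  have hp : p.Prime := Fact.out
  have hpI : Prime (p : ℤ) := Nat.prime_iff_prime_int.mp hp
  rw [Finset.mem_range, not_lt] at hpS
  have hdvd : c.den ∣ M := hM ▸ Nat.dvd_lcm_left _ _
  have huN : Nat.Coprime u c.den := hu.coprime_dvd_right hdvd
  have hpuN : p ≡ u [MOD c.den] := hpu.of_dvd hdvd
  have hb₁ : b.num ≠ 0 := Rat.num_ne_zero.mpr hb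
  have hb₂ : (b.den : ℤ) ≠ 0 := by exact_mod_cast b.den_ne_zero
  -- Outside the exceptional set every coefficient is `p`-integral, so `C = 0` works.
  refine ⟨0, fun n => ?_⟩
  let Q : ℕ → ℤ := fun j => ((b.den : ℤ) * (2 * (j : ℤ) + m)) ^ 2 - 4 * b.num ^ 2 * D
  let L : ℕ → ℤ := fun j => (c.den : ℤ) * (j : ℤ) + c.num
  let R : ℕ → ℤ := fun j => (j : ℤ) + 1
  have hQ0 : ∀ j, Q j ≠ 0 := fun j => sq_sub_ne_zero D b.num b.den hD hb₁ _
  have hL0 : ∀ j, L j ≠ 0 := den_mul_add_num_ne_zero c hc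
  have hR0 : ∀ j, R j ≠ 0 := fun j => by positivity
  have hval := padicValInt_prod_le p Q L R n (fun j _ => hQ0 j) (fun j _ => hL0 j)
    (fun j _ => hR0 j) fun k hk =>
      card_le c hc u p k huN hcond hpuN D b.num b.den m hD hb₁ hb₂ hk (by omega) (by omega)
        (by rw [abs_of_nonneg (by positivity)]; omega) (by omega) s hs n
  have hPQ : (∏ j ∈ Finset.range n, Q j) ≠ 0 := Finset.prod_ne_zero_iff.mpr fun j _ => hQ0 j
  have hPL : (∏ j ∈ Finset.range n, L j) ≠ 0 := Finset.prod_ne_zero_iff.mpr fun j _ => hL0 j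
  have hPR : (∏ j ∈ Finset.range n, R j) ≠ 0 := Finset.prod_ne_zero_iff.mpr fun j _ => hR0 j
  have h4ne : (4 * (b.den : ℤ) ^ 2) ^ n ≠ 0 := by positivity
  have hNne : (c.den : ℤ) ^ n ≠ 0 := pow_ne_zero _ (by exact_mod_cast c.den_ne_zero)
  have h4 : padicValInt p ((4 * (b.den : ℤ) ^ 2) ^ n) = 0 := by
    refine padicValInt.eq_zero_of_not_dvd fun h => ?_
    have h' : (p : ℤ) ∣ 2 * b.den := hpI.dvd_of_dvd_pow (n := 2) (by
      convert hpI.dvd_of_dvd_pow h using 1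
      ring)
    have := Int.le_of_dvd (by have := b.den_pos; omega) h'
    omega
  have heq := FDcoeff_mul_eq a b c ha hc D n
  have hx : FDcoeff a b c D n ≠ 0 := by
    intro h0
    rw [h0, zero_mul] at heq
    exact mul_ne_zero hNne hPQ (by exact_mod_cast heq.symm)
  have hv := congrArg (padicValRat p) heq
  rw [padicValRat.mul hx (Int.cast_ne_zero.mpr (mul_ne_zero h4ne (mul_ne_zero hPL hPR))),
    padicValRat.of_int, padicValRat.of_int, padicValInt.mul h4ne (mul_ne_zero hPL hPR),
    padicValInt.mul hPL hPR, padicValInt.mul hNne hPQ, h4] at hv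
  push_cast at hv
  have hval' : (padicValInt p (∏ j ∈ Finset.range n, L j) : ℤ)
      + padicValInt p (∏ j ∈ Finset.range n, R j)
      ≤ padicValInt p (∏ j ∈ Finset.range n, Q j) := by exact_mod_cast hval
  have := Int.natCast_nonneg (padicValInt p ((c.den : ℤ) ^ n))
  linarith
end

section
/- Let c ∈ ℚ with 0 < c < 1 and let M be a positive integer divisible by the denominator of c. Then the set {u ∈ (ℤ/Mℤ)^× : {−u^j c} ≤ 1/2 for all integers j ≥ 0} is nonempty if and only if c ≥ 1/2. -/
/-!
Both directions reduce to the value at `j = 0`: since `0 < c < 1`, `{-c} = 1 - c`, and this is at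
most `1/2` exactly when `1/2 ≤ c`. Conversely, for the unit `u = 1` every power gives the same
condition as `j = 0`, so it serves as witness.
-/

theorem stmt15 (c : ℚ) (hc0 : 0 < c) (hc1 : c < 1)
    (M : ℕ) (hM : 0 < M) (hden : c.den ∣ M) :
    (∃ u : (ZMod M)ˣ, ∀ j : ℕ,
        Int.fract (-(((u ^ j : (ZMod M)ˣ) : ZMod M).val : ℚ) * c) ≤ 1 / 2) ↔
      1 / 2 ≤ c := by
  -- A rational strictly between 0 and 1 is not an integer, so `1 < M` and `1 : ZMod M` has
  -- representative 1 (in `ZMod 1` it would be 0).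
  have hM1 : M ≠ 1 := by
    rintro rfl
    have hint : ((c.num : ℤ) : ℚ) = c := Rat.coe_int_num_of_den_eq_one (Nat.dvd_one.mp hden)
    rw [← hint] at hc0 hc1
    have h0 : 0 < c.num := by exact_mod_cast hc0
    have h1 : c.num < 1 := by exact_mod_cast hc1
    omega
  have : Fact (1 < M) := ⟨by omega⟩
  have hfr : Int.fract (-((1 : ZMod M).val : ℚ) * c) = 1 - c := by
    rw [ZMod.val_one, Int.fract_eq_iff]
    exact ⟨by linarith, by linarith, -1, by push_cast; ring⟩
  constructor
  · rintro ⟨u, hu⟩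
    have h := hu 0
    rw [pow_zero, Units.val_one, hfr] at h
    linarith
  · intro h
    refine ⟨1, fun j => ?_⟩
    rw [one_pow, Units.val_one, hfr]
    linarith
end

section
/- Let a, c ∈ ℚ with 0 < a, c < 1, and suppose that 2a and 2c are not both integers. Let M₁ be the least common multiple of the denominators of a and c, and define B(a;c) ⊆ (ℤ/M₁ℤ)^× as follows: if 2a ∉ ℤ, then B(a;c) = {u : {−u^j c} ≤ (1/2)·{−2u^j a} for all integers j ≥ 0}; if 2a ∈ ℤ, then B(a;c) = {u : {−u^j c} ≤ 1/2 for all integers j ≥ 0}. Then 2·|B(a;c)| ≤ φ(M₁), where φ is Euler's totient function; that is, the ratio D(a;c) = |B(a;c)|/φ(M₁) is at most 1/2. -/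
/-!
Write `M` for the least common multiple of the denominators. Already the condition at `j = 1` cannot
hold for both `u` and `-u`. Since `u` is a unit and `c ∉ ℤ`, also `u c ∉ ℤ`, so
`{-u c} + {u c} = 1`. If `2a ∉ ℤ`, then adding the two conditions gives
`1 ≤ (1/2) ({-2ua} + {2ua}) = 1/2`. If `2a ∈ ℤ`, then both fractional parts have to be `1/2`, which
makes `2uc`, and hence `2c`, an integer, against the hypothesis. So `B(a;c)` is disjoint from its image
under the injective map `u ↦ -u`, and both lie in a group of order `φ(M)`.
-/


/-- The set `B(a;c) ⊆ (ℤ/Mℤ)ˣ`: if `2a ∉ ℤ` it consists of the classes `u` with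
`{-u^j c} ≤ (1/2)·{-2u^j a}` for all `j ≥ 0`, and if `2a ∈ ℤ` of the classes `u`
with `{-u^j c} ≤ 1/2` for all `j ≥ 0`. -/
def Bset (a c : ℚ) (M : ℕ) : Set (ZMod M)ˣ :=
  if (2 * a).den = 1 then
    {u | ∀ j : ℕ, Int.fract (-(((u ^ j : (ZMod M)ˣ) : ZMod M).val : ℚ) * c) ≤ 1 / 2}
  else
    {u | ∀ j : ℕ, Int.fract (-(((u ^ j : (ZMod M)ˣ) : ZMod M).val : ℚ) * c) ≤
          (1 / 2) * Int.fract (-2 * (((u ^ j : (ZMod M)ˣ) : ZMod M).val : ℚ) * a)}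

/-- Multiplication by an integer coprime to `M` preserves non-integrality of the rationals
whose denominator divides `M`. -/
lemma int_of_coprime_mul {M k : ℕ} (hk : k.Coprime M) {x : ℚ} (hM : ∃ m : ℤ, (M : ℚ) * x = m)
    (hx : ∃ n : ℤ, (k : ℚ) * x = n) : ∃ z : ℤ, x = z := by
  obtain ⟨m, hm⟩ := hM
  obtain ⟨n, hn⟩ := hx
  obtain ⟨p, q, hpq⟩ := Nat.isCoprime_iff_coprime.mpr hk
  have hpq' : (p : ℚ) * k + q * M = 1 := by exact_mod_cast hpq
  refine ⟨p * n + q * m, ?_⟩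
  push_cast
  rw [← hn, ← hm]
  linear_combination -x * hpq'

lemma fract_val_add_fract_val_neg {M : ℕ} [NeZero M] (u : (ZMod M)ˣ) {x : ℚ}
    (hM : ∃ m : ℤ, (M : ℚ) * x = m) (hx : ¬ ∃ z : ℤ, x = z) :
    Int.fract (-((u : ZMod M).val : ℚ) * x) +
      Int.fract (-(((-u : (ZMod M)ˣ) : ZMod M).val : ℚ) * x) = 1 := by
  obtain ⟨d, hd⟩ : M ∣ (u : ZMod M).val + ((-u : (ZMod M)ˣ) : ZMod M).val := by
    rw [← ZMod.natCast_eq_zero_iff]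
    simp
  obtain ⟨m, hm⟩ := hM
  have hd' : ((u : ZMod M).val : ℚ) + (((-u : (ZMod M)ˣ) : ZMod M).val : ℚ) = M * d := by
    exact_mod_cast hd
  have h1 : -(((-u : (ZMod M)ˣ) : ZMod M).val : ℚ) * x
      = ((u : ZMod M).val : ℚ) * x - ((d * m : ℤ) : ℚ) := by
    push_cast
    rw [← hm]
    linear_combination -x * hd'
  have h2 : Int.fract (((u : ZMod M).val : ℚ) * x) ≠ 0 := by
    intro h0
    obtain ⟨z, hz⟩ := Int.fract_eq_zero_iff.mp h0
    exact hx (int_of_coprime_mul (ZMod.val_coe_unit_coprime u) ⟨m, hm⟩ ⟨z, hz.symm⟩)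
  rw [h1, Int.fract_sub_intCast, neg_mul, Int.fract_neg h2]
  ring

lemma mul_int_of_den_dvd {M : ℕ} {x : ℚ} (h : x.den ∣ M) : ∃ m : ℤ, (M : ℚ) * x = m := by
  obtain ⟨d, rfl⟩ := h
  refine ⟨d * x.num, ?_⟩
  push_cast
  linear_combination (d : ℚ) * Rat.mul_den_eq_num x

lemma den_eq_one_of_int {x : ℚ} (h : ∃ z : ℤ, x = z) : x.den = 1 := by
  obtain ⟨z, rfl⟩ := h
  simp

theorem stmt17 (a c : ℚ) (ha0 : 0 < a) (ha1 : a < 1) (hc0 : 0 < c) (hc1 : c < 1)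
    (h : ¬ ((2 * a).den = 1 ∧ (2 * c).den = 1)) :
    2 * (Bset a c (Nat.lcm a.den c.den)).ncard ≤ Nat.totient (Nat.lcm a.den c.den) := by
  have haM := mul_int_of_den_dvd (Nat.dvd_lcm_left a.den c.den)
  have hcM := mul_int_of_den_dvd (Nat.dvd_lcm_right a.den c.den)
  have : NeZero (Nat.lcm a.den c.den) := ⟨Nat.lcm_ne_zero a.den_nz c.den_nz⟩
  generalize Nat.lcm a.den c.den = M at *
  have hc : ¬ ∃ z : ℤ, c = z := by
    rintro ⟨z, rfl⟩
    norm_cast at hc0 hc1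
    omega
  have key : ∀ u ∈ Bset a c M, -u ∉ Bset a c M := by
    intro u hu hu'
    have hsum := fract_val_add_fract_val_neg u hcM hc
    unfold Bset at hu hu'
    split_ifs at hu hu' with h2a
    · have e1 := hu 1
      have e2 := hu' 1
      rw [pow_one] at e1 e2
      have e3 : Int.fract (-((u : ZMod M).val : ℚ) * c) = 1 / 2 := by linarith
      refine h ⟨h2a, den_eq_one_of_int
        (int_of_coprime_mul (ZMod.val_coe_unit_coprime u) ?_ ?_)⟩
      · obtain ⟨m, hm⟩ := hcM
        exact ⟨2 * m, by push_cast; linear_combination 2 * hm⟩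
      · have e4 := Int.floor_add_fract (-((u : ZMod M).val : ℚ) * c)
        refine ⟨-(2 * ⌊-((u : ZMod M).val : ℚ) * c⌋ + 1), ?_⟩
        push_cast
        linear_combination 2 * e4 - 2 * e3
    · have e1 := hu 1
      have e2 := hu' 1
      rw [pow_one] at e1 e2
      have hsa := fract_val_add_fract_val_neg u (x := 2 * a)
        (by
          obtain ⟨m, hm⟩ := haM
          exact ⟨2 * m, by push_cast; linear_combination 2 * hm⟩)
        (fun hz => h2a (den_eq_one_of_int hz))
      have r : ∀ k : ℚ, -2 * k * a = -k * (2 * a) := fun k => by ring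
      rw [r] at e1 e2
      linarith
  have hdisj : Disjoint (Bset a c M) ((fun u => -u) '' Bset a c M) := by
    rw [Set.disjoint_right]
    rintro _ ⟨u, hu, rfl⟩
    exact key u hu
  calc 2 * (Bset a c M).ncard
      = (Bset a c M).ncard + ((fun u => -u) '' Bset a c M).ncard := by
        rw [Set.ncard_image_of_injective _ neg_injective, two_mul]
    _ = (Bset a c M ∪ (fun u => -u) '' Bset a c M).ncard :=
        (Set.ncard_union_eq hdisj (Set.toFinite _) (Set.toFinite _)).symm
    _ ≤ (Set.univ : Set (ZMod M)ˣ).ncard := Set.ncard_le_ncard (Set.subset_univ _) (Set.toFinite _)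
    _ = Nat.totient M := by
        rw [Set.ncard_univ, Nat.card_eq_fintype_card, ZMod.card_units_eq_totient]
end

section
/- Let a, c ∈ ℚ with 0 < a, c < 1, and suppose that 2a and 2c are not both integers. Let M₁ be the least common multiple of the denominators of a and c, and define B(a;c) ⊆ (ℤ/M₁ℤ)^× as follows: if 2a ∉ ℤ, then B(a;c) = {u : {−u^j c} ≤ (1/2)·{−2u^j a} for all integers j ≥ 0}; if 2a ∈ ℤ, then B(a;c) = {u : {−u^j c} ≤ 1/2 for all integers j ≥ 0}. Let Δ be a positive integer coprime to M₁, let S ⊆ (ℤ/Δℤ)^× be a subset with 2|S| ≤ φ(Δ), and set M = M₁·Δ. Then 4·|{u ∈ (ℤ/Mℤ)^× : (u mod M₁) ∈ B(a;c) and (u mod Δ) ∈ S}| ≤ φ(M). (In the paper this is applied with Δ the absolute value of the discriminant of a quadratic field K coprime to M₁ and S the set of congruence classes mod Δ that split in K, which has size φ(Δ)/2, yielding D_K(a;c) ≤ 1/4.) -/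
/-- A unit modulo `M` is prime to every divisor of `M`, so multiplying by it cannot clear the
denominator of `q`. -/
lemma den_eq_one_of_unit_mul {M : ℕ} (u : (ZMod M)ˣ) {q : ℚ} (hq : q.den ∣ M) {n : ℤ}
    (h : ((u : ZMod M).val : ℚ) * q = n) : q.den = 1 := by
  have hcop : Nat.Coprime (u : ZMod M).val q.den :=
    Nat.Coprime.coprime_dvd_right hq (ZMod.val_coe_unit_coprime u)
  have h1 : ((u : ZMod M).val : ℤ) * q.num = n * q.den := by
    have h2 : ((u : ZMod M).val : ℚ) * q.num = n * q.den := by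
      rw [← h, mul_assoc, Rat.mul_den_eq_num]
    exact_mod_cast h2
  have h3 : q.den ∣ (u : ZMod M).val * q.num.natAbs := by
    have h4 := Int.natAbs_dvd_natAbs.mpr (Dvd.intro_left n h1.symm)
    simpa [Int.natAbs_mul] using h4
  have h5 : q.den ∣ q.num.natAbs := hcop.symm.dvd_of_dvd_mul_left h3
  exact q.reduced.symm.eq_one_of_dvd h5

/-- The canonical representatives of `u` and `-u` sum to a multiple of `M`, hence of the denominator
of `q`; so the representative of `-u` times `q` is `-(u q)` modulo `1`. -/
lemma exists_val_neg_mul {M : ℕ} [NeZero M] (u : (ZMod M)ˣ) {q : ℚ} (hq : q.den ∣ M) :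
    ∃ k : ℤ, (((-u : (ZMod M)ˣ) : ZMod M).val : ℚ) * q = k - ((u : ZMod M).val : ℚ) * q := by
  have h1 : M ∣ ((-u : (ZMod M)ˣ) : ZMod M).val + (u : ZMod M).val := by
    rw [← ZMod.natCast_eq_zero_iff]
    simp
  obtain ⟨t, ht⟩ := hq.trans h1
  refine ⟨t * q.num, ?_⟩
  have h2 : (((-u : (ZMod M)ˣ) : ZMod M).val : ℚ) + ((u : ZMod M).val : ℚ) = q.den * t := by
    exact_mod_cast ht
  have h3 := Rat.mul_den_eq_num q
  push_cast
  linear_combination q * h2 + t * h3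

lemma fract_add_fract_neg_le_one (x : ℚ) : Int.fract x + Int.fract (-x) ≤ 1 := by
  by_cases hx : Int.fract x = 0
  · rw [hx, Int.fract_neg_eq_zero.mpr hx]
    norm_num
  · rw [Int.fract_neg hx]
    linarith

lemma neg_notMem_Bset {a c : ℚ} (hc0 : 0 < c) (hc1 : c < 1)
    (h : ¬ ((2 * a).den = 1 ∧ (2 * c).den = 1)) {M : ℕ} [NeZero M] (haM : a.den ∣ M)
    (hcM : c.den ∣ M) {u : (ZMod M)ˣ} (hu : u ∈ Bset a c M) : -u ∉ Bset a c M := by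
  intro hv
  have htwo : ∀ q : ℚ, (2 * q).den ∣ q.den := fun q => by
    simpa using Rat.mul_den_dvd 2 q
  obtain ⟨k, hk⟩ := exists_val_neg_mul u hcM
  have hne : Int.fract (((u : ZMod M).val : ℚ) * c) ≠ 0 := by
    intro h0
    obtain ⟨n, hn⟩ := Int.fract_eq_zero_iff.mp h0
    have hd := den_eq_one_of_unit_mul u hcM hn.symm
    rw [← Rat.coe_int_num_of_den_eq_one hd] at hc0 hc1
    norm_cast at hc0 hc1
    omega
  have hneg := Int.fract_neg hne
  have hfc : Int.fract (-(((-u : (ZMod M)ˣ) : ZMod M).val : ℚ) * c)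
      = Int.fract (((u : ZMod M).val : ℚ) * c) := by
    rw [Int.fract_eq_fract]
    exact ⟨-k, by rw [Int.cast_neg]; linarith⟩
  unfold Bset at hu hv
  split_ifs at hu hv with h2a
  · have hu1 := hu 1
    have hv1 := hv 1
    rw [pow_one] at hu1 hv1
    rw [hfc] at hv1
    rw [neg_mul, hneg] at hu1
    have hhalf : Int.fract (((u : ZMod M).val : ℚ) * c) = 1 / 2 := by linarith
    refine h ⟨h2a, den_eq_one_of_unit_mul u ((htwo c).trans hcM)
      (n := 2 * ⌊((u : ZMod M).val : ℚ) * c⌋ + 1) ?_⟩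
    have hfl := Int.floor_add_fract (((u : ZMod M).val : ℚ) * c)
    push_cast
    linarith
  · have hu1 := hu 1
    have hv1 := hv 1
    rw [pow_one] at hu1 hv1
    rw [hfc] at hv1
    rw [neg_mul, hneg] at hu1
    obtain ⟨l, hl⟩ := exists_val_neg_mul u haM
    have hfa : Int.fract (-2 * (((-u : (ZMod M)ˣ) : ZMod M).val : ℚ) * a)
        = Int.fract (-(-2 * ((u : ZMod M).val : ℚ) * a)) := by
      rw [Int.fract_eq_fract]
      exact ⟨-(2 * l), by rw [Int.cast_neg, Int.cast_mul, Int.cast_ofNat]; linarith⟩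
    rw [hfa] at hv1
    have := fract_add_fract_neg_le_one (-2 * ((u : ZMod M).val : ℚ) * a)
    linarith

lemma two_mul_ncard_Bset_le {a c : ℚ} (hc0 : 0 < c) (hc1 : c < 1)
    (h : ¬ ((2 * a).den = 1 ∧ (2 * c).den = 1)) {M : ℕ} [NeZero M] (haM : a.den ∣ M)
    (hcM : c.den ∣ M) : 2 * (Bset a c M).ncard ≤ Nat.totient M := by
  have hdisj : Disjoint (Bset a c M) ((fun u => -u) '' Bset a c M) := by
    rw [Set.disjoint_left]
    rintro _ hu ⟨v, hv, rfl⟩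
    exact neg_notMem_Bset hc0 hc1 h haM hcM hv hu
  have h1 := Set.ncard_union_eq hdisj (Set.toFinite _) (Set.toFinite _)
  rw [Set.ncard_image_of_injective _ neg_injective] at h1
  have h2 := Set.ncard_le_card (Bset a c M ∪ (fun u => -u) '' Bset a c M)
  rw [Nat.card_eq_fintype_card, ZMod.card_units_eq_totient] at h2
  omega

theorem stmt18 (a c : ℚ) (ha0 : 0 < a) (ha1 : a < 1) (hc0 : 0 < c) (hc1 : c < 1)
    (h : ¬ ((2 * a).den = 1 ∧ (2 * c).den = 1))
    (Δ : ℕ) (hΔ : 0 < Δ) (hcop : Nat.Coprime (Nat.lcm a.den c.den) Δ)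
    (S : Set (ZMod Δ)ˣ) (hS : 2 * S.ncard ≤ Nat.totient Δ) :
    4 * {u : (ZMod (Nat.lcm a.den c.den * Δ))ˣ |
          Units.map (ZMod.castHom (dvd_mul_right (Nat.lcm a.den c.den) Δ)
              (ZMod (Nat.lcm a.den c.den))).toMonoidHom u ∈ Bset a c (Nat.lcm a.den c.den) ∧
          Units.map (ZMod.castHom (dvd_mul_left Δ (Nat.lcm a.den c.den))
              (ZMod Δ)).toMonoidHom u ∈ S}.ncard ≤
      Nat.totient (Nat.lcm a.den c.den * Δ) := by
  have hM : NeZero (Nat.lcm a.den c.den) := ⟨Nat.lcm_ne_zero a.den_ne_zero c.den_ne_zero⟩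
  have hD : NeZero Δ := ⟨hΔ.ne'⟩
  have hB := two_mul_ncard_Bset_le hc0 hc1 h (Nat.dvd_lcm_left a.den c.den)
    (Nat.dvd_lcm_right a.den c.den)
  generalize Bset a c (Nat.lcm a.den c.den) = B at hB ⊢
  generalize Nat.lcm a.den c.den = N at *
  set f := Units.map (ZMod.castHom (dvd_mul_right N Δ) (ZMod N)).toMonoidHom with hf
  set g := Units.map (ZMod.castHom (dvd_mul_left Δ N) (ZMod Δ)).toMonoidHom with hg
  have hinj : Function.Injective fun u => (f u, g u) := by
    intro u v huv
    obtain ⟨h1, h2⟩ := Prod.mk.inj huv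
    ext1
    apply (ZMod.chineseRemainder hcop).injective
    have e1 : (RingHom.fst _ _).comp (ZMod.chineseRemainder hcop).toRingHom
        = ZMod.castHom (dvd_mul_right N Δ) (ZMod N) := RingHom.ext_zmod _ _
    have e2 : (RingHom.snd _ _).comp (ZMod.chineseRemainder hcop).toRingHom
        = ZMod.castHom (dvd_mul_left Δ N) (ZMod Δ) := RingHom.ext_zmod _ _
    refine Prod.ext ?_ ?_
    · exact (RingHom.congr_fun e1 _).trans
        ((congrArg Units.val h1).trans (RingHom.congr_fun e1 _).symm)
    · exact (RingHom.congr_fun e2 _).trans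
        ((congrArg Units.val h2).trans (RingHom.congr_fun e2 _).symm)
  have hle : {u | f u ∈ B ∧ g u ∈ S}.ncard ≤ (B ×ˢ S).ncard :=
    Set.ncard_le_ncard_of_injOn (fun u => (f u, g u)) (fun u hu => hu) hinj.injOn
      (Set.toFinite _)
  rw [Set.ncard_prod] at hle
  rw [Nat.totient_mul hcop]
  calc 4 * {u | f u ∈ B ∧ g u ∈ S}.ncard ≤ 4 * (B.ncard * S.ncard) := by gcongr
    _ = (2 * B.ncard) * (2 * S.ncard) := by ring
    _ ≤ _ := Nat.mul_le_mul hB hS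
end
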